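/- Let (Γ, M) be a boundary pair with M connected and not homeomorphic to the circle S¹, and let ρ : Γ → SL₄(ℝ) be a relatively 1-Anosov representation with respect to (Γ, M). Then the stabilizer of every bounded parabolic point of M is virtually free abelian of rank at most 2: it has a finite-index subgroup isomorphic to ℤ or to ℤ × ℤ. -/

import Mathlib

open Filter Topology Matrix

noncomputable instance projectivizationTopology
    {K V : Type*} [DivisionRing K] [AddCommGroup V] [Module K V] [TopologicalSpace V] :
    TopologicalSpace (Projectivization K V) :=
  inferInstanceAs (TopologicalSpace (Quotient _))

/-- `g n • z → a` locally uniformly on `M ∖ {b}`. -/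
def ConvLocUnif {Γ M : Type} [SMul Γ M] [TopologicalSpace M]
    (g : ℕ → Γ) (a b : M) : Prop :=
  ∀ K : Set M, IsCompact K → b ∉ K →
    ∀ U ∈ 𝓝 a, ∀ᶠ n in atTop, ∀ z ∈ K, g n • z ∈ U

/-- The action of `Γ` on `M` is an action by homeomorphisms with the convergence property. -/
def IsConvergenceAction (Γ M : Type) [Group Γ] [TopologicalSpace M] [MulAction Γ M] : Prop :=
  (∀ γ : Γ, Continuous fun x : M => γ • x) ∧
  ∀ g : ℕ → Γ, Function.Injective g →
    ∃ φ : ℕ → ℕ, StrictMono φ ∧ ∃ a b : M, ConvLocUnif (fun n => g (φ n)) a b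

def IsConicalLimitPoint (Γ : Type) {M : Type} [Group Γ] [TopologicalSpace M]
    [MulAction Γ M] (x : M) : Prop :=
  ∃ a b : M, a ≠ b ∧ ∃ g : ℕ → Γ,
    Tendsto (fun n => g n • x) atTop (𝓝 a) ∧
    ∀ y : M, y ≠ x → Tendsto (fun n => g n • y) atTop (𝓝 b)

def IsBoundedParabolicPoint (Γ : Type) {M : Type} [Group Γ] [TopologicalSpace M]
    [MulAction Γ M] (x : M) : Prop :=
  Infinite (MulAction.stabilizer Γ x) ∧
  (∀ y : M, (∀ γ ∈ MulAction.stabilizer Γ x, γ • y = y) → y = x) ∧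
  (∃ K : Set M, IsCompact K ∧ x ∉ K ∧
    ∀ y : M, y ≠ x → ∃ γ ∈ MulAction.stabilizer Γ x, γ • y ∈ K)

/-- `(Γ, M)` is a boundary pair: `Γ` is a finitely generated group acting as a geometrically
finite convergence group on the perfect compact metrizable space `M`. -/
structure IsBoundaryPair (Γ M : Type) [Group Γ] [TopologicalSpace M] [MulAction Γ M] : Prop where
  fg : Group.FG Γ
  compact : CompactSpace M
  metrizable : TopologicalSpace.MetrizableSpace M
  perfect : ∀ x : M, Filter.NeBot (𝓝[≠] x)
  conv : IsConvergenceAction Γ M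
  gf : ∀ x : M, IsConicalLimitPoint Γ x ∨
    (IsBoundedParabolicPoint Γ x ∧ Group.FG (MulAction.stabilizer Γ x))

/-- A relatively 1-Anosov representation into `SL_d(ℝ)`, recorded through its limit maps
`ξ : M → ℙ(ℝ^d)` and `ξs : M → ℙ((ℝ^d)*)`, where a functional is recorded by the vector
pairing with it under the dot product. -/
structure IsRelOneAnosov {Γ M : Type} [Group Γ] [TopologicalSpace M] [MulAction Γ M] {d : ℕ}
    (ρ : Γ →* Matrix.SpecialLinearGroup (Fin d) ℝ)
    (ξ : M → Projectivization ℝ (Fin d → ℝ))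
    (ξs : M → Projectivization ℝ (Fin d → ℝ)) : Prop where
  continuous_fst : Continuous ξ
  continuous_snd : Continuous ξs
  equivariant_fst : ∀ (γ : Γ) (x : M) (v : Fin d → ℝ) (hv : v ≠ 0)
      (hgv : (ρ γ : Matrix (Fin d) (Fin d) ℝ) *ᵥ v ≠ 0),
      ξ x = Projectivization.mk ℝ v hv →
      ξ (γ • x) = Projectivization.mk ℝ ((ρ γ : Matrix (Fin d) (Fin d) ℝ) *ᵥ v) hgv
  equivariant_snd : ∀ (γ : Γ) (x : M) (φ : Fin d → ℝ) (hφ : φ ≠ 0)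
      (hgφ : φ ᵥ* (((ρ γ)⁻¹ : Matrix.SpecialLinearGroup (Fin d) ℝ) : Matrix (Fin d) (Fin d) ℝ) ≠ 0),
      ξs x = Projectivization.mk ℝ φ hφ →
      ξs (γ • x) = Projectivization.mk ℝ
        (φ ᵥ* (((ρ γ)⁻¹ : Matrix.SpecialLinearGroup (Fin d) ℝ) : Matrix (Fin d) (Fin d) ℝ)) hgφ
  transverse : ∀ (x y : M), x ≠ y → ∀ (v φ : Fin d → ℝ) (hv : v ≠ 0) (hφ : φ ≠ 0),
      ξ x = Projectivization.mk ℝ v hv → ξs y = Projectivization.mk ℝ φ hφ → φ ⬝ᵥ v ≠ 0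
  dynamics : ∀ (g : ℕ → Γ) (x y : M),
      (∀ z : M, z ≠ y → Tendsto (fun n => g n • z) atTop (𝓝 x)) →
      (∀ z : M, z ≠ x → Tendsto (fun n => (g n)⁻¹ • z) atTop (𝓝 y)) →
      ∀ (φ : Fin d → ℝ) (hφ : φ ≠ 0), ξs y = Projectivization.mk ℝ φ hφ →
      ∀ (u : Fin d → ℝ) (hu : ∀ n, (ρ (g n) : Matrix (Fin d) (Fin d) ℝ) *ᵥ u ≠ 0),
        φ ⬝ᵥ u ≠ 0 →
        Tendsto (fun n => Projectivization.mk ℝ ((ρ (g n) : Matrix (Fin d) (Fin d) ℝ) *ᵥ u) (hu n))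
          atTop (𝓝 (ξ x))

/-- The unit circle `S¹`. -/
abbrev Circle1 : Type := Metric.sphere (0 : EuclideanSpace ℝ (Fin 2)) 1

/-- A group is virtually `ℤ` or `ℤ × ℤ`. -/
def VZ (G : Type*) [Group G] : Prop :=
  ∃ H : Subgroup G, H.FiniteIndex ∧
    (Nonempty (H ≃* Multiplicative ℤ) ∨ Nonempty (H ≃* Multiplicative (ℤ × ℤ)))

lemma VZ_of_subgroup {G : Type*} [Group G] (K : Subgroup G) (hK : K.FiniteIndex) (h : VZ K) :
    VZ G := by
  obtain ⟨H, hH, h⟩ := h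
  refine ⟨H.map K.subtype, ?_, ?_⟩
  · rw [Subgroup.finiteIndex_iff, Subgroup.index_map_subtype]
    exact mul_ne_zero (Subgroup.finiteIndex_iff.1 hH) (Subgroup.finiteIndex_iff.1 hK)
  · have e := H.equivMapOfInjective K.subtype K.subtype_injective
    rcases h with ⟨⟨h⟩⟩ | ⟨⟨h⟩⟩
    · exact Or.inl ⟨e.symm.trans h⟩
    · exact Or.inr ⟨e.symm.trans h⟩

lemma finiteIndex_of_cover {G : Type*} [Group G] (H : Subgroup G) (S : Set G) (hS : S.Finite)
    (h : ∀ g : G, ∃ k ∈ H, g * k ∈ S) : H.FiniteIndex := by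
  rw [Subgroup.finiteIndex_iff_finite_quotient]
  have := hS.to_subtype
  refine Finite.of_surjective (fun s : S => (QuotientGroup.mk (s : G) : G ⧸ H)) ?_
  intro q
  obtain ⟨g, rfl⟩ := QuotientGroup.mk_surjective q
  obtain ⟨k, hk, hS⟩ := h g
  refine ⟨⟨g * k, hS⟩, ?_⟩
  simpa using QuotientGroup.mk_mul_of_mem g hk

lemma VZ_of_hom_int {G : Type*} [Group G] (f : Multiplicative ℤ →* G)
    (hf : Function.Injective f) (S : Set G) (hS : S.Finite)
    (h : ∀ g : G, ∃ k, g * f k ∈ S) : VZ G := by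
  refine ⟨f.range, finiteIndex_of_cover _ S hS ?_, Or.inl ⟨(MonoidHom.ofInjective hf).symm⟩⟩
  intro g
  obtain ⟨k, hk⟩ := h g
  exact ⟨f k, ⟨k, rfl⟩, hk⟩

lemma VZ_of_hom_int2 {G : Type*} [Group G] (f : Multiplicative (ℤ × ℤ) →* G)
    (hf : Function.Injective f) (S : Set G) (hS : S.Finite)
    (h : ∀ g : G, ∃ k, g * f k ∈ S) : VZ G := by
  refine ⟨f.range, finiteIndex_of_cover _ S hS ?_, Or.inr ⟨(MonoidHom.ofInjective hf).symm⟩⟩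
  intro g
  obtain ⟨k, hk⟩ := h g
  exact ⟨f k, ⟨k, rfl⟩, hk⟩

lemma VZ_of_zpow {G : Type*} [Group G] (z : G) (hz : ∀ k : ℤ, z ^ k = 1 → k = 0)
    (S : Set G) (hS : S.Finite) (h : ∀ g : G, ∃ k : ℤ, g * z ^ k ∈ S) : VZ G := by
  refine VZ_of_hom_int (zpowersHom G z) ?_ S hS ?_
  · rw [injective_iff_map_eq_one]
    intro a ha
    simp only [zpowersHom_apply] at ha
    have := hz _ ha
    exact Multiplicative.toAdd.injective (by simpa using this)
  · intro g
    obtain ⟨k, hk⟩ := h g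
    exact ⟨Multiplicative.ofAdd k, by simpa using hk⟩

lemma hom_zpow_aux {G : Type*} [Group G] (l : G → ℝ × ℝ) (hl : ∀ g h, l (g * h) = l g + l h) :
    ∃ f : G →* Multiplicative (ℝ × ℝ), ∀ g, l g = Multiplicative.toAdd (f g) :=
  ⟨MonoidHom.mk' (fun g => Multiplicative.ofAdd (l g)) (fun g h => by simp [hl]), fun g => rfl⟩

/-- A proper homomorphism to `ℝ²`. -/
lemma VZ_of_proper {G : Type*} [Group G] [Infinite G] (l : G → ℝ × ℝ)
    (hl : ∀ g h, l (g * h) = l g + l h) (hp : ∀ D : ℝ, {g | ‖l g‖ ≤ D}.Finite) : VZ G := by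
  obtain ⟨f, hf⟩ := hom_zpow_aux l hl
  have hz : ∀ g (k : ℤ), l (g ^ k) = k • l g := fun g k => by simp [hf]
  have h1 : l 1 = 0 := by simp [hf]
  let L : Submodule ℤ (ℝ × ℝ) :=
    { carrier := Set.range l
      add_mem' := by rintro _ _ ⟨a, rfl⟩ ⟨b, rfl⟩; exact ⟨a * b, hl a b⟩
      zero_mem' := ⟨1, h1⟩
      smul_mem' := by rintro k _ ⟨a, rfl⟩; exact ⟨a ^ k, hz a k⟩ }
  have hLfin : ∀ D : ℝ, {v : ℝ × ℝ | v ∈ L ∧ ‖v‖ ≤ D}.Finite := fun D => by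
    refine ((hp D).image l).subset ?_
    rintro v ⟨⟨g, rfl⟩, hg⟩
    exact ⟨g, hg, rfl⟩
  have hdisc : DiscreteTopology L := by
    rw [discreteTopology_iff_isOpen_singleton_zero]
    have hfin : {v : ℝ × ℝ | (v ∈ L ∧ ‖v‖ ≤ 1) ∧ v ≠ 0}.Finite := (hLfin 1).subset fun v hv => hv.1
    have ho : IsOpen (Metric.ball (0 : ℝ × ℝ) 1 ∩ {v : ℝ × ℝ | (v ∈ L ∧ ‖v‖ ≤ 1) ∧ v ≠ 0}ᶜ) :=
      Metric.isOpen_ball.inter hfin.isClosed.isOpen_compl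
    refine ⟨_, ho, ?_⟩
    ext ⟨v, hv⟩
    simp only [Set.mem_preimage, Set.mem_inter_iff, Metric.mem_ball, dist_zero_right,
      Set.mem_compl_iff, Set.mem_ofPred_eq, Set.mem_singleton_iff, Submodule.mk_eq_zero]
    constructor
    · rintro ⟨h1, h2⟩
      by_contra h0
      exact h2 ⟨⟨hv, h1.le⟩, h0⟩
    · rintro rfl; simp
  have hrank : Module.finrank ℤ L ≤ 2 := by
    have h := Real.finrank_eq_int_finrank_of_discrete (s := (L : Set (ℝ × ℝ))) (by
      rw [Submodule.span_eq]; exact hdisc)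
    have h2 : Set.finrank ℤ (L : Set (ℝ × ℝ)) = Module.finrank ℤ L := by
      unfold Set.finrank; rw [Submodule.span_eq]
    rw [← h2, ← h]
    have := Submodule.finrank_le (Submodule.span ℝ (L : Set (ℝ × ℝ)))
    simpa [Set.finrank] using this
  obtain ⟨k, hk⟩ : ∃ k, Module.finrank ℤ L = k := ⟨_, rfl⟩
  have b := Module.finBasisOfFinrankEq ℤ L hk
  have hlift : ∀ i, ∃ g, l g = b i := fun i => (b i).2
  choose x hx using hlift
  have hrep : ∀ g, ∃ c : Fin k → ℤ, l g = ∑ i, c i • l (x i) := fun g => by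
    refine ⟨fun i => b.repr ⟨l g, ⟨g, rfl⟩⟩ i, ?_⟩
    have := congrArg Subtype.val (b.sum_repr ⟨l g, ⟨g, rfl⟩⟩)
    simp only [Submodule.coe_sum, Submodule.coe_smul] at this
    simp only [hx]
    exact this.symm
  have hli : ∀ c : Fin k → ℤ, ∑ i, c i • l (x i) = 0 → ∀ i, c i = 0 := fun c hc => by
    refine Fintype.linearIndependent_iff.1 b.linearIndependent c ?_
    apply Subtype.ext
    simpa [hx] using hc
  rw [hk] at hrank
  interval_cases k
  · exfalso
    refine Set.infinite_univ ((hp 0).subset fun g _ => ?_)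
    obtain ⟨c, hc⟩ := hrep g
    simp [hc]
  · refine VZ_of_zpow (x 0) ?_ _ (hp 0) ?_
    · intro k hk
      have := hli (fun _ => k) (by simp [← hz, hk, h1])
      exact this 0
    · intro g
      obtain ⟨c, hc⟩ := hrep g
      refine ⟨-c 0, ?_⟩
      show ‖_‖ ≤ _
      rw [hl, hz, hc]
      simp
  · -- rank two
    obtain ⟨m, hm, hcomm⟩ : ∃ m : ℤ, 0 < m ∧ Commute (x 0) (x 1 ^ m) := by
      have hmaps : ∀ k : ℕ, (x 1) ^ k * x 0 * ((x 1) ^ k)⁻¹ * (x 0)⁻¹ ∈ {g | ‖l g‖ ≤ 0} := by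
        intro k
        simp [hf]
      obtain ⟨p, -, q, -, hpq, he⟩ := Set.infinite_univ.exists_ne_map_eq_of_mapsTo
        (fun k _ => hmaps k) (hp 0)
      wlog hlt : p < q generalizing p q
      · exact this q p hpq.symm he.symm (lt_of_le_of_ne (not_lt.1 hlt) hpq.symm)
      refine ⟨(q - p : ℕ), by omega, ?_⟩
      have he2 := mul_right_cancel he
      have hq : x 1 ^ q = x 1 ^ p * x 1 ^ (q - p) := by rw [← pow_add]; congr 1; omega
      rw [hq] at he2
      rw [zpow_natCast]
      unfold Commute SemiconjBy
      have he3 : x 1 ^ p * x 0 * (x 1 ^ p)⁻¹ =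
        x 1 ^ p * (x 1 ^ (q - p) * x 0 * (x 1 ^ (q - p))⁻¹) * (x 1 ^ p)⁻¹ := by
        rw [he2]; group
      have he4 := mul_left_cancel (mul_right_cancel he3)
      calc x 0 * x 1 ^ (q - p)
          = (x 1 ^ (q - p) * x 0 * (x 1 ^ (q - p))⁻¹) * x 1 ^ (q - p) := by rw [← he4]
        _ = _ := by group
    let F : Multiplicative (ℤ × ℤ) →* G := MonoidHom.mk'
      (fun a => x 0 ^ (Multiplicative.toAdd a).1 * (x 1 ^ m) ^ (Multiplicative.toAdd a).2) (by
        intro a b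
        simp only [toAdd_mul, Prod.fst_add, Prod.snd_add, _root_.zpow_add]
        have := (hcomm.zpow_zpow (Multiplicative.toAdd b).1 (Multiplicative.toAdd a).2).eq
        rw [mul_assoc, mul_assoc]
        congr 1
        rw [← mul_assoc, ← mul_assoc, this])
    have hF : ∀ i j : ℤ, F (Multiplicative.ofAdd (i, j)) = x 0 ^ i * (x 1 ^ m) ^ j :=
      fun i j => rfl
    refine VZ_of_hom_int2 F ?_ _ (hp (m * ‖l (x 1)‖)) ?_
    · rw [injective_iff_map_eq_one]
      intro a ha
      obtain ⟨⟨i, j⟩, rfl⟩ := Multiplicative.ofAdd.surjective a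
      rw [hF, ← _root_.zpow_mul] at ha
      have := hli ![i, m * j] (by
        have := congrArg l ha
        rw [hl, hz, hz, h1] at this
        simpa using this)
      have h0 := this 0
      have h1 := this 1
      simp at h0 h1
      rcases h1 with h1 | h1
      · omega
      · simp [h0, h1]
    · intro g
      obtain ⟨c, hc⟩ := hrep g
      refine ⟨Multiplicative.ofAdd (-c 0, -(c 1 / m)), ?_⟩
      rw [hF, ← _root_.zpow_mul]
      have e : l (g * (x 0 ^ (-c 0) * x 1 ^ (m * -(c 1 / m)))) = (c 1 % m) • l (x 1) := by
        rw [hl, hl, hz, hz, hc, Int.emod_def]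
        simp only [Fin.sum_univ_two]
        module
      show ‖_‖ ≤ _
      rw [e, ← Int.cast_smul_eq_zsmul ℝ, norm_smul]
      have h1 := Int.emod_nonneg (c 1) hm.ne'
      have h2 := Int.emod_lt_of_pos (c 1) hm
      gcongr
      rw [Real.norm_eq_abs, abs_of_nonneg (by exact_mod_cast h1)]
      exact_mod_cast h2.le

open Asymptotics

abbrev M4 : Type := Matrix (Fin 4) (Fin 4) ℝ

/-- The `(0,3)` entry dominates all the other entries, and tends to infinity. -/
def Dom {ι : Type*} (l : Filter ι) (A : ι → M4) : Prop :=
  (∀ i j, ¬(i = 0 ∧ j = 3) → (fun n => A n i j) =o[l] (fun n => A n 0 3)) ∧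
  (fun _ : ι => (1 : ℝ)) =o[l] (fun n => A n 0 3)

lemma Dom.mul_right {ι : Type*} {l : Filter ι} {A R : ι → M4} (hA : Dom l A)
    (hR : ∀ i j, (fun n => R n i j) =O[l] (fun _ => (1 : ℝ)))
    (hR3 : ∀ n j, j ≠ 3 → R n 3 j = 0)
    (hR33 : (fun _ => (1 : ℝ)) =O[l] (fun n => R n 3 3)) : Dom l (fun n => A n * R n) := by
  have key : ∀ i k j, ¬(i = 0 ∧ k = 3) →
      (fun n => A n i k * R n k j) =o[l] (fun n => A n 0 3) := fun i k j h => by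
    simpa using (hA.1 i k h).mul_isBigO (hR k j)
  have h03 : (fun n => A n 0 3) =O[l] (fun n => (A n * R n) 0 3) := by
    have h1 : (fun n => A n 0 3) =O[l] (fun n => A n 0 3 * R n 3 3) := by
      simpa using (isBigO_refl (fun n => A n 0 3) l).mul hR33
    have h2 : (fun n => A n 0 0 * R n 0 3 + A n 0 1 * R n 1 3 + A n 0 2 * R n 2 3)
        =o[l] (fun n => A n 0 3 * R n 3 3) :=
      ((((key 0 0 3 (by decide)).add (key 0 1 3 (by decide))).add
        (key 0 2 3 (by decide)))).trans_isBigO h1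
    refine h1.trans ?_
    refine h2.right_isBigO_add.congr_right fun n => ?_
    simp [Matrix.mul_apply, Fin.sum_univ_four]
  refine ⟨fun i j hij => ?_, hA.2.trans_isBigO h03⟩
  refine IsLittleO.trans_isBigO ?_ h03
  have hk : ∀ k ∈ (Finset.univ : Finset (Fin 4)),
      (fun n => A n i k * R n k j) =o[l] (fun n => A n 0 3) := by
    intro k _
    by_cases h : i = 0 ∧ k = 3
    · have hj : j ≠ 3 := fun hj => hij ⟨h.1, hj⟩
      simp [h.2, hR3 _ j hj]
    · exact key i k j h
  simpa only [Matrix.mul_apply] using IsLittleO.fun_sum hk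

lemma Dom.transp {ι : Type*} {l : Filter ι} {A : ι → M4} (hA : Dom l A) :
    Dom l (fun n => ((A n).submatrix Fin.rev Fin.rev)ᵀ) := by
  refine ⟨fun i j hij => ?_, by simpa using hA.2⟩
  have := hA.1 (Fin.rev j) (Fin.rev i) (by revert hij; revert i j; decide)
  simpa using this

lemma Dom.mul_left {ι : Type*} {l : Filter ι} {A R : ι → M4} (hA : Dom l A)
    (hR : ∀ i j, (fun n => R n i j) =O[l] (fun _ => (1 : ℝ)))
    (hR0 : ∀ n i, i ≠ 0 → R n i 0 = 0)
    (hR00 : (fun _ => (1 : ℝ)) =O[l] (fun n => R n 0 0)) : Dom l (fun n => R n * A n) := by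
  have := (hA.transp.mul_right (R := fun n => ((R n).submatrix Fin.rev Fin.rev)ᵀ)
    (fun i j => by simpa using hR (Fin.rev j) (Fin.rev i))
    (fun n j hj => by
      have := hR0 n (Fin.rev j) (by revert hj; revert j; decide)
      simpa using this) (by simpa using hR00)).transp
  convert this using 2 with n
  rw [← Matrix.transpose_mul]
  ext i j
  simp [Matrix.mul_apply, Fin.sum_univ_four]
  ring

lemma Dom.comp {ι κ : Type*} {l : Filter ι} {l' : Filter κ} {A : ι → M4} (hA : Dom l A)
    {f : κ → ι} (hf : Tendsto f l' l) : Dom l' (fun n => A (f n)) :=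
  ⟨fun i j h => (hA.1 i j h).comp_tendsto hf, hA.2.comp_tendsto hf⟩

structure DomRep {G : Type*} [Group G] (m : G →* M4) : Prop where
  col : ∀ g i, i ≠ 0 → m g i 0 = 0
  row : ∀ g j, j ≠ 3 → m g 3 j = 0
  det : ∀ g, (m g).det = 1
  dom : Dom cofinite (fun g => m g)

lemma DomRep.subgroup {G : Type*} [Group G] {m : G →* M4} (h : DomRep m) (K : Subgroup G) :
    DomRep (m.comp K.subtype) where
  col g := h.col g
  row g := h.row g
  det g := h.det g
  dom := h.dom.comp K.subtype_injective.tendsto_cofinite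

def conjHom {G : Type*} [Group G] (m : G →* M4) (S S' : M4) (h : S * S' = 1) : G →* M4 where
  toFun g := S * m g * S'
  map_one' := by simp [h]
  map_mul' g k := by
    have h' : S' * S = 1 := mul_eq_one_comm.1 h
    rw [map_mul]
    calc S * (m g * m k) * S' = S * m g * (1 : M4) * m k * S' := by simp [mul_assoc]
      _ = _ := by rw [← h']; simp only [mul_assoc]

lemma DomRep.conj {G : Type*} [Group G] {m : G →* M4} (h : DomRep m) (S S' : M4) (hS : S * S' = 1)
    (hc : ∀ i, i ≠ 0 → S i 0 = 0) (hc' : ∀ i, i ≠ 0 → S' i 0 = 0)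
    (hr : ∀ j, j ≠ 3 → S 3 j = 0) (hr' : ∀ j, j ≠ 3 → S' 3 j = 0) :
    DomRep (conjHom m S S' hS) where
  col g i hi := by
    have h1 := h.col g
    simp only [conjHom, MonoidHom.coe_mk, OneHom.coe_mk, Matrix.mul_apply, Fin.sum_univ_four]
    simp [hc i hi, hc', h1]
  row g j hj := by
    have h1 := h.row g
    simp only [conjHom, MonoidHom.coe_mk, OneHom.coe_mk, Matrix.mul_apply, Fin.sum_univ_four]
    simp [hr' j hj, hr, h1]
  det g := by
    have : S.det * S'.det = 1 := by rw [← Matrix.det_mul, hS, Matrix.det_one]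
    simp only [conjHom, MonoidHom.coe_mk, OneHom.coe_mk, Matrix.det_mul, h.det]
    linarith
  dom := by
    have h00 : S 0 0 * S' 0 0 = 1 := by
      have := congrFun (congrFun hS 0) 0
      simpa [Matrix.mul_apply, Fin.sum_univ_four, hc'] using this
    have h33 : S 3 3 * S' 3 3 = 1 := by
      have := congrFun (congrFun hS 3) 3
      simpa [Matrix.mul_apply, Fin.sum_univ_four, hr] using this
    exact ((h.dom.mul_left (R := fun _ => S) (fun i j => isBigO_const_const _ one_ne_zero _)
      (fun _ => hc) (isBigO_const_const _ (left_ne_zero_of_mul_eq_one h00) _)).mul_right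
        (R := fun _ => S')
      (fun i j => isBigO_const_const _ one_ne_zero _)
      (fun _ => hr') (isBigO_const_const _ (right_ne_zero_of_mul_eq_one h33) _))

lemma isLittleO_smul_self {ι : Type*} {l : Filter ι} [l.NeBot] {c : ι → ℝ} {r : ℝ}
    (h1 : (fun _ : ι => (1 : ℝ)) =o[l] c) (h : (fun n => r * c n) =o[l] c) : r = 0 := by
  by_contra hr
  have h2 : c =o[l] c := by
    have := h.const_mul_left r⁻¹
    refine this.congr_left fun n => ?_
    field_simp
  have h3 := h2.bound (show (0:ℝ) < 1/2 by norm_num)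
  have h4 := h1.bound (show (0:ℝ) < 1 by norm_num)
  obtain ⟨n, hn, hn'⟩ := (h3.and h4).exists
  simp only [norm_one] at hn'
  linarith

section blocks
variable {G : Type*} [Group G] {m : G →* M4}

lemma DomRep.mul00 (h : DomRep m) (g k : G) : m (g * k) 0 0 = m g 0 0 * m k 0 0 := by
  simp [map_mul, Matrix.mul_apply, Fin.sum_univ_four, h.col]

lemma DomRep.mul33 (h : DomRep m) (g k : G) : m (g * k) 3 3 = m g 3 3 * m k 3 3 := by
  simp [map_mul, Matrix.mul_apply, Fin.sum_univ_four, h.row]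

def DomRep.mid (h : DomRep m) : G →* Matrix (Fin 2) (Fin 2) ℝ where
  toFun g := !![m g 1 1, m g 1 2; m g 2 1, m g 2 2]
  map_one' := by
    ext i j; fin_cases i <;> fin_cases j <;> simp
  map_mul' g k := by
    ext i j
    fin_cases i <;> fin_cases j <;>
    simp [map_mul, Matrix.mul_apply, Fin.sum_univ_four, h.col, h.row]

def DomRep.h00 (h : DomRep m) : G →* ℝ where
  toFun g := m g 0 0
  map_one' := by simp
  map_mul' := h.mul00

def DomRep.h33 (h : DomRep m) : G →* ℝ where
  toFun g := m g 3 3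
  map_one' := by simp
  map_mul' := h.mul33

lemma DomRep.det_blocks (h : DomRep m) (g : G) :
    m g 0 0 * m g 3 3 * (h.mid g).det = 1 := by
  rw [← h.det g, Matrix.det_succ_column_zero (m g)]
  simp [Fin.sum_univ_four, Matrix.det_fin_three, h.col, h.row, DomRep.mid,
    Fin.succAbove, Matrix.det_fin_two]
  ring

lemma DomRep.mid_apply (h : DomRep m) (g : G) :
    h.mid g = !![m g 1 1, m g 1 2; m g 2 1, m g 2 2] := rfl

lemma DomRep.pow_dom (h : DomRep m) {g : G} (hg : Function.Injective fun n : ℕ => g ^ n) :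
    Dom atTop (fun n : ℕ => m (g ^ n)) := by
  have := h.dom.comp hg.tendsto_cofinite
  rwa [Nat.cofinite_eq_atTop] at this

lemma DomRep.pow_growth (h : DomRep m) {g : G} (hg : Function.Injective fun n : ℕ => g ^ n) :
    m g 0 0 = m g 3 3 ∧ ∀ K : ℝ, |m g 0 0| < K →
      ∀ i j, (fun n : ℕ => m (g ^ n) i j) =O[atTop] (fun n => K ^ n) := by
  have hd := h.pow_dom hg
  have h1 : (fun n : ℕ => m (g ^ (n + 1)) 0 3 - m g 0 0 * m (g ^ n) 0 3) =o[atTop]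
      (fun n : ℕ => m (g ^ n) 0 3) := by
    have := (((hd.1 1 3 (by decide)).const_mul_left (m g 0 1)).add
      ((hd.1 2 3 (by decide)).const_mul_left (m g 0 2))).add
      ((hd.1 3 3 (by decide)).const_mul_left (m g 0 3))
    refine this.congr_left fun n => ?_
    rw [pow_succ', map_mul]
    simp [Matrix.mul_apply, Fin.sum_univ_four]
    ring
  have h2 : (fun n : ℕ => m (g ^ (n + 1)) 0 3 - m g 3 3 * m (g ^ n) 0 3) =o[atTop]
      (fun n : ℕ => m (g ^ n) 0 3) := by
    have := (((hd.1 0 1 (by decide)).const_mul_left (m g 1 3)).add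
      ((hd.1 0 2 (by decide)).const_mul_left (m g 2 3))).add
      ((hd.1 0 0 (by decide)).const_mul_left (m g 0 3))
    refine this.congr_left fun n => ?_
    rw [pow_succ, map_mul]
    simp [Matrix.mul_apply, Fin.sum_univ_four]
    ring
  constructor
  · have h3 : (fun n : ℕ => (m g 3 3 - m g 0 0) * m (g ^ n) 0 3) =o[atTop]
      (fun n : ℕ => m (g ^ n) 0 3) := by
      refine (h1.sub h2).congr_left fun n => ?_
      ring
    have := isLittleO_smul_self hd.2 h3
    linarith
  · intro K hK i j
    have hK0 : 0 < K := lt_of_le_of_lt (abs_nonneg _) hK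
    have hb := h1.bound (sub_pos.2 hK)
    have hstep : ∀ᶠ n : ℕ in atTop, |m (g ^ (n + 1)) 0 3| ≤ K * |m (g ^ n) 0 3| := by
      filter_upwards [hb] with n hn
      rw [Real.norm_eq_abs, Real.norm_eq_abs] at hn
      have : |m (g ^ (n + 1)) 0 3| ≤ |m (g ^ (n + 1)) 0 3 - m g 0 0 * m (g ^ n) 0 3| +
          |m g 0 0 * m (g ^ n) 0 3| := by
        have := abs_add_le (m (g ^ (n + 1)) 0 3 - m g 0 0 * m (g ^ n) 0 3)
          (m g 0 0 * m (g ^ n) 0 3)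
        simpa using this
      rw [abs_mul] at this
      linarith
    have hc : (fun n : ℕ => m (g ^ n) 0 3) =O[atTop] (fun n => K ^ n) := by
      obtain ⟨N, hN⟩ := eventually_atTop.1 hstep
      refine IsBigO.of_bound (|m (g ^ N) 0 3| / K ^ N) (eventually_atTop.2 ⟨N, fun n hn => ?_⟩)
      induction n, hn using Nat.le_induction with
      | base => rw [Real.norm_eq_abs, Real.norm_eq_abs, abs_of_pos (pow_pos hK0 N)]; field_simp; rfl
      | succ n hn ih =>
        rw [Real.norm_eq_abs, Real.norm_eq_abs, abs_of_pos (pow_pos hK0 _)] at ih ⊢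
        calc _ ≤ K * |m (g ^ n) 0 3| := hN n hn
          _ ≤ K * (|m (g ^ N) 0 3| / K ^ N * K ^ n) := by gcongr
          _ = _ := by rw [pow_succ]; ring
    by_cases hij : i = 0 ∧ j = 3
    · rw [hij.1, hij.2]; exact hc
    · exact (hd.1 i j hij).isBigO.trans hc

lemma pow_le_of_isBigO {x K : ℝ} (hK : 0 < K)
    (h : (fun n : ℕ => x ^ n) =O[atTop] (fun n => K ^ n)) : x ≤ K := by
  by_contra hlt
  push Not at hlt
  have h2 : (fun n : ℕ => K ^ n) =o[atTop] (fun n => x ^ n) :=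
    isLittleO_pow_pow_of_lt_left hK.le hlt
  have h3 : (fun n : ℕ => x ^ n) =o[atTop] (fun n => x ^ n) := h.trans_isLittleO h2
  have := h3.bound (show (0:ℝ) < 1/2 by norm_num)
  obtain ⟨n, hn⟩ := this.exists
  have : 0 < ‖x ^ n‖ := norm_pos_iff.2 (pow_ne_zero _ (hK.trans hlt).ne')
  linarith

lemma DomRep.mid_growth (h : DomRep m) {g : G} (hg : Function.Injective fun n : ℕ => g ^ n)
    {K : ℝ} (hK : |m g 0 0| < K) (i j : Fin 2) :
    (fun n : ℕ => (h.mid g ^ n) i j) =O[atTop] (fun n => K ^ n) := by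
  have := (h.pow_growth hg).2 K hK
  simp only [← map_pow]
  fin_cases i <;> fin_cases j
  · exact this 1 1
  · exact this 1 2
  · exact this 2 1
  · exact this 2 2

lemma DomRep.one_le_abs (h : DomRep m) {g : G} (hg : Function.Injective fun n : ℕ => g ^ n) :
    1 ≤ |m g 0 0| := by
  have heq := (h.pow_growth hg).1
  have hdet := h.det_blocks g
  have key : ∀ K : ℝ, |m g 0 0| < K → |(h.mid g).det| ≤ K * K := by
    intro K hK
    have hK0 : 0 < K := lt_of_le_of_lt (abs_nonneg _) hK
    refine pow_le_of_isBigO (mul_pos hK0 hK0) ?_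
    have hgr := h.mid_growth hg hK
    have : (fun n : ℕ => (h.mid g ^ n).det) =O[atTop] (fun n => (K * K) ^ n) := by
      simp only [Matrix.det_fin_two, mul_pow]
      exact ((hgr 0 0).mul (hgr 1 1)).sub ((hgr 0 1).mul (hgr 1 0))
    refine this.norm_left.congr_left fun n => ?_
    rw [Matrix.det_pow, norm_pow, Real.norm_eq_abs]
  rw [← heq] at hdet
  have hle : |(h.mid g).det| ≤ |m g 0 0| * |m g 0 0| := by
    refine le_of_forall_gt_imp_ge_of_dense ?_
    intro c hc
    have hc0 : 0 ≤ c := (mul_nonneg (abs_nonneg _) (abs_nonneg _)).trans hc.le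
    have := key (Real.sqrt c) (by
      rw [← Real.sqrt_mul_self (abs_nonneg (m g 0 0))]
      exact Real.sqrt_lt_sqrt (mul_nonneg (abs_nonneg _) (abs_nonneg _)) hc)
    rwa [Real.mul_self_sqrt hc0] at this
  by_contra hlt
  push Not at hlt
  have h0 := abs_nonneg (m g 0 0)
  have h1 : |m g 0 0| * |m g 0 0| * |(h.mid g).det| = 1 := by
    rw [← abs_mul, ← abs_mul, hdet, abs_one]
  have h2 : |m g 0 0| * |m g 0 0| < 1 := by nlinarith
  have h3 : |(h.mid g).det| < 1 := by linarith
  nlinarith [abs_nonneg (h.mid g).det, mul_nonneg h0 h0]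

lemma pow_inj_or {G : Type*} [Group G] (g : G) :
    (Function.Injective fun n : ℕ => g ^ n) ∨ ∃ n : ℕ, 0 < n ∧ g ^ n = 1 := by
  by_cases h : IsOfFinOrder g
  · exact Or.inr (isOfFinOrder_iff_pow_eq_one.1 h)
  · exact Or.inl (injective_pow_iff_not_isOfFinOrder.2 h)

lemma DomRep.abs00 (h : DomRep m) (g : G) : |m g 0 0| = 1 := by
  rcases pow_inj_or g with hg | ⟨n, hn, hg⟩
  · refine le_antisymm ?_ (h.one_le_abs hg)
    have hg' : Function.Injective fun n : ℕ => g⁻¹ ^ n := by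
      intro a b hab
      simp only [inv_pow, _root_.inv_inj] at hab
      exact hg hab
    have h1 := h.one_le_abs hg'
    have h2 : m g 0 0 * m g⁻¹ 0 0 = 1 := by rw [← h.mul00]; simp
    have h3 : |m g 0 0| * |m g⁻¹ 0 0| = 1 := by rw [← abs_mul, h2, abs_one]
    nlinarith [abs_nonneg (m g 0 0)]
  · have : (m g 0 0) ^ n = 1 := by
      have := map_pow h.h00 g n
      rw [hg, map_one] at this
      exact this.symm
    have h2 : |m g 0 0| ^ n = 1 := by rw [← abs_pow, this, abs_one]
    exact (pow_eq_one_iff_of_nonneg (abs_nonneg _) hn.ne').1 h2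

lemma DomRep.abs33 (h : DomRep m) (g : G) : |m g 3 3| = 1 := by
  rcases pow_inj_or g with hg | ⟨n, hn, hg⟩
  · rw [← (h.pow_growth hg).1, h.abs00]
  · have : (m g 3 3) ^ n = 1 := by
      have := map_pow h.h33 g n
      rw [hg, map_one] at this
      exact this.symm
    have h2 : |m g 3 3| ^ n = 1 := by rw [← abs_pow, this, abs_one]
    exact (pow_eq_one_iff_of_nonneg (abs_nonneg _) hn.ne').1 h2

/-- No eigenvalue of the middle block has modulus bigger than one. -/
lemma DomRep.eig (h : DomRep m) (g : G) (t : ℝ) (v : Fin 2 → ℝ) (hv : v ≠ 0)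
    (hev : h.mid g *ᵥ v = t • v) : |t| ≤ 1 := by
  have hpow : ∀ n : ℕ, (h.mid g ^ n) *ᵥ v = t ^ n • v := by
    intro n
    induction n with
    | zero => simp
    | succ n ih => rw [pow_succ, ← Matrix.mulVec_mulVec, hev, Matrix.mulVec_smul, ih, smul_smul,
        pow_succ, mul_comm]
  obtain ⟨i, hi⟩ := Function.ne_iff.1 hv
  simp only [Pi.zero_apply] at hi
  rcases pow_inj_or g with hg | ⟨n, hn, hg⟩
  · refine le_of_forall_gt_imp_ge_of_dense fun K hK => ?_
    have hK0 : 0 < K := by linarith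
    refine pow_le_of_isBigO hK0 ?_
    have hgr := h.mid_growth hg (K := K) (by rw [h.abs00]; exact hK)
    have h1 : (fun n : ℕ => (h.mid g ^ n) i 0 * v 0 + (h.mid g ^ n) i 1 * v 1) =O[atTop]
        (fun n => K ^ n) := by
      refine IsBigO.add ?_ ?_
      · exact ((hgr i 0).const_mul_left (v 0)).congr_left fun n => mul_comm _ _
      · exact ((hgr i 1).const_mul_left (v 1)).congr_left fun n => mul_comm _ _
    have h2 := (h1.const_mul_left (v i)⁻¹).norm_left
    refine h2.congr_left fun n => ?_
    have := congrFun (hpow n) i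
    simp only [Matrix.mulVec, dotProduct, Fin.sum_univ_two, Pi.smul_apply, smul_eq_mul] at this
    rw [this, mul_comm (t ^ n), ← mul_assoc, inv_mul_cancel₀ hi, one_mul, norm_pow,
      Real.norm_eq_abs]
  · have h1 := hpow n
    rw [← map_pow, hg, map_one, Matrix.one_mulVec] at h1
    have h2 := congrFun h1 i
    simp only [Pi.smul_apply, smul_eq_mul] at h2
    have h3 : t ^ n = 1 := by
      have : (t ^ n - 1) * v i = 0 := by linarith
      rcases mul_eq_zero.1 this with h | h
      · linarith
      · exact absurd h hi
    have h2 : |t| ^ n = 1 := by rw [← abs_pow, h3, abs_one]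
    exact ((pow_eq_one_iff_of_nonneg (abs_nonneg _) hn.ne').1 h2).le

end blocks

/-- A normalized representation: corner entries are one and the middle traces are at most two. -/
structure DomRep1 {G : Type*} [Group G] (m : G →* M4) : Prop extends DomRep m where
  e00 : ∀ g, m g 0 0 = 1
  e33 : ∀ g, m g 3 3 = 1

lemma exists_eigvec (B : Matrix (Fin 2) (Fin 2) ℝ) (t : ℝ)
    (ht : t ^ 2 - (B 0 0 + B 1 1) * t + B.det = 0) : ∃ v ≠ 0, B *ᵥ v = t • v := by
  have : (B - t • (1 : Matrix (Fin 2) (Fin 2) ℝ)).det = 0 := by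
    rw [Matrix.det_fin_two] at ht ⊢
    simp
    linarith
  obtain ⟨v, hv, h⟩ := Matrix.exists_mulVec_eq_zero_iff.2 this
  refine ⟨v, hv, ?_⟩
  rw [Matrix.sub_mulVec, Matrix.smul_mulVec, Matrix.one_mulVec] at h
  exact sub_eq_zero.1 h

lemma DomRep1.mid_det {G : Type*} [Group G] {m : G →* M4} (h : DomRep1 m) (g : G) :
    (h.mid g).det = 1 := by
  have := h.det_blocks g
  rwa [h.e00, h.e33, one_mul, one_mul] at this

lemma DomRep1.trace_le {G : Type*} [Group G] {m : G →* M4} (h : DomRep1 m) (g : G) :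
    |h.mid g 0 0 + h.mid g 1 1| ≤ 2 := by
  by_contra hlt
  push Not at hlt
  set T := h.mid g 0 0 + h.mid g 1 1 with hT
  have hpos : 0 < T ^ 2 - 4 := by
    have := sq_abs T
    nlinarith
  set s := Real.sqrt (T ^ 2 - 4) with hs
  have hss : s * s = T ^ 2 - 4 := Real.mul_self_sqrt hpos.le
  have hs0 : 0 < s := Real.sqrt_pos.2 hpos
  have hroot : ∀ t : ℝ, t ^ 2 - T * t + 1 = 0 → |t| ≤ 1 := fun t ht => by
    obtain ⟨v, hv, hev⟩ := exists_eigvec (h.mid g) t (by rw [h.mid_det]; exact ht)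
    exact h.eig g t v hv hev
  have h1 := abs_le.1 (hroot ((T + s) / 2) (by nlinarith))
  have h2 := abs_le.1 (hroot ((T - s) / 2) (by nlinarith))
  rcases lt_abs.1 hlt with h3 | h3 <;> linarith [h1.1, h1.2, h2.1, h2.2]

lemma DomRep.exists_normalized {G : Type*} [Group G] {m : G →* M4} (h : DomRep m) :
    ∃ K : Subgroup G, K.FiniteIndex ∧ DomRep1 (m.comp K.subtype) := by
  have f0 : ∀ (f : G →* ℝ), (∀ g, |f g| = 1) → (f.ker).FiniteIndex := by
    intro f hf
    have hu : ∀ g, f g ≠ 0 := fun g h0 => by have := hf g; simp [h0] at this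
    let F : G →* ℝˣ := f.toHomUnits
    have hF : ∀ g, (F g : ℝ) = f g := fun g => rfl
    have hfin : Finite F.range := by
      have : (Set.range F).Finite := by
        refine Set.Finite.subset (Set.toFinite {1, -1}) ?_
        rintro _ ⟨g, rfl⟩
        rcases eq_or_eq_neg_of_abs_eq (hf g) with h | h
        · left; ext; rw [hF, h]; rfl
        · right; ext; rw [hF, h]; rfl
      exact this.to_subtype
    have : F.ker = f.ker := by
      ext g
      rw [MonoidHom.mem_ker, MonoidHom.mem_ker, ← hF g, Units.ext_iff]; rfl
    rw [← this]
    infer_instance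
  have i0 := f0 h.h00 h.abs00
  have i3 := f0 h.h33 h.abs33
  refine ⟨h.h00.ker ⊓ h.h33.ker, inferInstance, ⟨h.subgroup _, fun g => ?_, fun g => ?_⟩⟩
  · exact g.2.1
  · exact g.2.2

lemma DomRep.finite_le {G : Type*} [Group G] {m : G →* M4} (h : DomRep m) (D : ℝ) :
    {g | |m g 0 3| ≤ D}.Finite := by
  have := h.dom.2.bound (c := 1 / (|D| + 1)) (by positivity)
  rw [eventually_cofinite] at this
  refine this.subset fun g hg => ?_
  simp only [Set.mem_ofPred_eq, norm_one, Real.norm_eq_abs, not_le] at hg ⊢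
  rw [div_mul_eq_mul_div, one_mul, div_lt_one (by positivity)]
  linarith [le_abs_self D]

/-- `z` is a central elementary unipotent. -/
def IsCentralElem (A : M4) : Prop :=
  (∀ i j, ¬(i = 0 ∧ j = 3) → A i j = (1 : M4) i j) ∧ A 0 3 ≠ 0

lemma VZ_of_central {G : Type*} [Group G] {m : G →* M4} (h : DomRep1 m) (z : G)
    (hz : IsCentralElem (m z)) : VZ G := by
  obtain ⟨h1, hc⟩ := hz
  set c := m z 0 3 with hcdef
  have step : ∀ g, m (g * z) 0 3 = m g 0 3 + c := fun g => by
    rw [map_mul, Matrix.mul_apply, Fin.sum_univ_four, h1 1 3 (by decide), h1 2 3 (by decide),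
      h1 3 3 (by decide), h.e00]
    simp
    ring
  have key : ∀ g (k : ℤ), m (g * z ^ k) 0 3 = m g 0 3 + k * c := fun g k => by
    induction k using Int.induction_on with
    | zero => simp
    | succ k ih =>
      rw [_root_.zpow_add_one, ← mul_assoc, step, ih]; push_cast; ring
    | pred k ih =>
      have := step (g * z ^ (-(k : ℤ) - 1))
      rw [mul_assoc, ← _root_.zpow_add_one, sub_add_cancel, ih] at this
      push_cast at this ⊢
      linarith
  refine VZ_of_zpow z ?_ _ (h.finite_le |c|) ?_
  · intro k hk
    have := key 1 k
    rw [hk] at this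
    simp at this
    rcases this with h | h
    · exact h
    · exact absurd h hc
  · intro g
    refine ⟨-round (m g 0 3 / c), ?_⟩
    simp only [Set.mem_ofPred_eq]
    rw [key]
    have h2 := abs_sub_round (m g 0 3 / c)
    have h3 : m g 0 3 + ((-round (m g 0 3 / c) : ℤ) : ℝ) * c =
      (m g 0 3 / c - round (m g 0 3 / c)) * c := by
      push_cast; field_simp; ring
    rw [h3, abs_mul]
    nlinarith [abs_nonneg c]

/-- Upper unitriangular dominated representations. -/
structure DomRepU {G : Type*} [Group G] (m : G →* M4) : Prop extends DomRep1 m where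
  e11 : ∀ g, m g 1 1 = 1
  e22 : ∀ g, m g 2 2 = 1
  e21 : ∀ g, m g 2 1 = 0

/-- Exponential of the strictly upper triangular matrix with the given coordinates. -/
noncomputable def upExp (X : Fin 6 → ℝ) : M4 :=
  !![1, X 0, X 3 + X 0 * X 1 / 2, X 5 + (X 0 * X 4 + X 3 * X 2) / 2 + X 0 * X 1 * X 2 / 6;
     0, 1, X 1, X 4 + X 1 * X 2 / 2;
     0, 0, 1, X 2;
     0, 0, 0, 1]

noncomputable def upLog (A : M4) : Fin 6 → ℝ :=
  ![A 0 1, A 1 2, A 2 3, A 0 2 - A 0 1 * A 1 2 / 2, A 1 3 - A 1 2 * A 2 3 / 2,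
    A 0 3 - (A 0 1 * A 1 3 + A 0 2 * A 2 3) / 2 + A 0 1 * A 1 2 * A 2 3 / 3]

def UpComm (X Y : Fin 6 → ℝ) : Prop :=
  X 0 * Y 1 = Y 0 * X 1 ∧ X 1 * Y 2 = Y 1 * X 2 ∧ X 0 * Y 4 + X 3 * Y 2 = Y 0 * X 4 + Y 3 * X 2

lemma upExp_add (X Y : Fin 6 → ℝ) (h : UpComm X Y) : upExp (X + Y) = upExp X * upExp Y := by
  obtain ⟨h1, h2, h3⟩ := h
  ext i j
  fin_cases i <;> fin_cases j <;>
    simp [upExp, Matrix.mul_apply, Fin.sum_univ_four]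
  · ring
  · linear_combination (-1/2) * h1
  · linear_combination (-1/2) * h3 - (1/6) * (X 2 + 2 * Y 2) * h1 - (1/6) * (2 * X 0 + Y 0) * h2
  · ring
  · linear_combination (-1/2) * h2
  · ring

lemma upExp_continuous (i j : Fin 4) : Continuous fun X => upExp X i j := by
  fin_cases i <;> fin_cases j <;> simp [upExp] <;> fun_prop

lemma upExp_bounded (R : ℝ) (i j : Fin 4) : ∃ C : ℝ, ∀ X, ‖X‖ ≤ R → |upExp X i j| ≤ C := by
  obtain ⟨C, hC⟩ := (isCompact_closedBall (0 : Fin 6 → ℝ) R).exists_bound_of_continuousOn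
    (upExp_continuous i j).continuousOn
  exact ⟨C, fun X hX => hC X (by simpa using hX)⟩

section unip
variable {G : Type*} [Group G] {m : G →* M4}

lemma DomRepU.upExp_log (h : DomRepU m) (g : G) : upExp (upLog (m g)) = m g := by
  ext i j
  fin_cases i <;> fin_cases j <;>
    simp [upExp, upLog, h.e00, h.e11, h.e22, h.e33, h.e21, h.col, h.row] <;> ring

/-- Powers of elements with vanishing superdiagonal. -/
lemma DomRepU.eq_one (h : DomRepU m) (hno : ∀ z, ¬ IsCentralElem (m z)) (z : G)
    (h01 : m z 0 1 = 0) (h12 : m z 1 2 = 0) (h23 : m z 2 3 = 0) : m z = 1 := by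
  have hp : ∀ n : ℕ, m (z ^ n) 0 1 = 0 ∧ m (z ^ n) 1 2 = 0 ∧ m (z ^ n) 2 3 = 0 ∧
      m (z ^ n) 0 2 = m z 0 2 * n ∧ m (z ^ n) 1 3 = m z 1 3 * n ∧ m (z ^ n) 0 3 = m z 0 3 * n := by
    intro n
    induction n with
    | zero => simp
    | succ n ih =>
      obtain ⟨i1, i2, i3, i4, i5, i6⟩ := ih
      rw [pow_succ, map_mul]
      simp only [Matrix.mul_apply, Fin.sum_univ_four, i1, i2, i3, i4, i5, i6, h01, h12, h23, h.e00,
        h.e11, h.e22, h.e33, h.e21, h.row z 2 (by decide), h.row z 1 (by decide),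
        h.row _ 2 (show (2 : Fin 4) ≠ 3 by decide), h.col _ 1 (show (1 : Fin 4) ≠ 0 by decide),
        h.col _ 2 (show (2 : Fin 4) ≠ 0 by decide)]
      push_cast
      refine ⟨?_, ?_, ?_, ?_, ?_, ?_⟩ <;> ring
  have hz02 : m z 0 2 = 0 ∧ m z 1 3 = 0 := by
    by_contra hne
    have hinj : Function.Injective fun n : ℕ => z ^ n := by
      intro a b hab
      simp only at hab
      have ha := hp a
      have hb := hp b
      rw [hab] at ha
      have e1 : m z 0 2 * a = m z 0 2 * b := by rw [← ha.2.2.2.1, hb.2.2.2.1]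
      have e2 : m z 1 3 * a = m z 1 3 * b := by rw [← ha.2.2.2.2.1, hb.2.2.2.2.1]
      by_contra hab'
      have : (a : ℝ) - b ≠ 0 := sub_ne_zero.2 (by exact_mod_cast hab')
      refine hne ⟨?_, ?_⟩
      · have h' : m z 0 2 * ((a : ℝ) - b) = 0 := by linarith
        exact (mul_eq_zero.1 h').resolve_right this
      · have h' : m z 1 3 * ((a : ℝ) - b) = 0 := by linarith
        exact (mul_eq_zero.1 h').resolve_right this
    have hd := h.pow_dom hinj
    have hc : m z 0 3 ≠ 0 := by
      intro h0
      have h1 := hd.2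
      have h2 := h1.bound (show (0:ℝ) < 1 by norm_num)
      obtain ⟨n, hn⟩ := h2.exists
      beta_reduce at hn
      rw [(hp n).2.2.2.2.2, h0] at hn
      norm_num at hn
    have aux : ∀ i j, ¬(i = 0 ∧ j = 3) → ∀ r : ℝ, (∀ n : ℕ, m (z ^ n) i j = r * n) → r = 0 := by
      intro i j hij r hr
      have h1 := hd.1 i j hij
      have h2 : (fun n : ℕ => (r / m z 0 3) * m (z ^ n) 0 3) =o[atTop]
          (fun n : ℕ => m (z ^ n) 0 3) := by
        refine h1.congr_left fun n => ?_
        show m (z ^ n) i j = _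
        rw [hr, (hp n).2.2.2.2.2]
        field_simp
      have := isLittleO_smul_self hd.2 h2
      rw [div_eq_zero_iff] at this
      exact this.resolve_right hc
    exact hne ⟨aux 0 2 (by decide) _ fun n => (hp n).2.2.2.1,
      aux 1 3 (by decide) _ fun n => (hp n).2.2.2.2.1⟩
  have hent : ∀ i j, ¬(i = 0 ∧ j = 3) → m z i j = (1 : M4) i j := by
    intro i j hij
    fin_cases i <;> fin_cases j <;>
      simp [h.e00, h.e11, h.e22, h.e33, h.e21, h.col, h.row, h01, h12, h23, hz02] <;> simp at hij
  have h03 : m z 0 3 = 0 := by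
    by_contra hne
    exact hno z ⟨hent, hne⟩
  ext i j
  by_cases hij : i = 0 ∧ j = 3
  · rw [hij.1, hij.2, h03]; simp
  · exact hent i j hij

lemma DomRepU.super (h : DomRepU m) (g k : G) : m (g * k) 0 1 = m g 0 1 + m k 0 1 ∧
    m (g * k) 1 2 = m g 1 2 + m k 1 2 ∧ m (g * k) 2 3 = m g 2 3 + m k 2 3 := by
  rw [map_mul]
  simp only [Matrix.mul_apply, Fin.sum_univ_four, h.e00,
        h.e11, h.e22, h.e33, h.e21, 
        h.row _ 2 (show (2 : Fin 4) ≠ 3 by decide), h.row _ 1 (show (1 : Fin 4) ≠ 3 by decide),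
        h.col _ 1 (show (1 : Fin 4) ≠ 0 by decide),
        h.col _ 2 (show (2 : Fin 4) ≠ 0 by decide)]
  refine ⟨?_, ?_, ?_⟩ <;> ring

lemma DomRepU.comm (h : DomRepU m) (hno : ∀ z, ¬ IsCentralElem (m z)) (g k : G) :
    m (g * k) = m (k * g) := by
  have h1 : ∀ i j, (∀ a b, m (a * b) i j = m a i j + m b i j) →
      m (g * k * (k * g)⁻¹) i j = 0 := by
    intro i j hij
    have e1 : m 1 i j = 0 := by have := hij 1 1; rw [mul_one] at this; linarith
    have e2 := hij (k * g) (k * g)⁻¹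
    rw [mul_inv_cancel, e1, hij] at e2
    rw [hij, hij g k]
    linarith
  have h2 := h.eq_one hno (g * k * (k * g)⁻¹) (h1 0 1 fun a b => (h.super a b).1)
    (h1 1 2 fun a b => (h.super a b).2.1) (h1 2 3 fun a b => (h.super a b).2.2)
  have h3 : m (g * k * (k * g)⁻¹ * (k * g)) = m (k * g) := by rw [map_mul, h2, one_mul]
  rwa [inv_mul_cancel_right] at h3

lemma DomRepU.upComm (h : DomRepU m) (hno : ∀ z, ¬ IsCentralElem (m z)) (g k : G) :
    UpComm (upLog (m g)) (upLog (m k)) := by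
  have hc := h.comm hno g k
  rw [map_mul, map_mul] at hc
  have h02 := congrFun (congrFun hc 0) 2
  have h13 := congrFun (congrFun hc 1) 3
  have h03 := congrFun (congrFun hc 0) 3
  simp only [Matrix.mul_apply, Fin.sum_univ_four, h.e00,
        h.e11, h.e22, h.e33, h.e21, 
        h.row _ 2 (show (2 : Fin 4) ≠ 3 by decide), h.row _ 1 (show (1 : Fin 4) ≠ 3 by decide),
        h.col _ 1 (show (1 : Fin 4) ≠ 0 by decide),
        h.col _ 2 (show (2 : Fin 4) ≠ 0 by decide)] at h02 h13 h03
  have e02 : m g 0 1 * m k 1 2 = m k 0 1 * m g 1 2 := by linarith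
  have e13 : m g 1 2 * m k 2 3 = m k 1 2 * m g 2 3 := by linarith
  refine ⟨?_, ?_, ?_⟩ <;> simp [upLog]
  · exact e02
  · exact e13
  · linear_combination h03 - (1/2)*(m k 2 3 + m g 2 3)*e02 - (1/2)*(m k 0 1 + m g 0 1)*e13

end unip

section unip
variable {G : Type*} [Group G] {m : G →* M4}

lemma upLog_upExp (X : Fin 6 → ℝ) : upLog (upExp X) = X := by
  ext i
  fin_cases i <;> simp [upExp, upLog] <;> ring

lemma DomRepU.upLog_mul (h : DomRepU m) (hno : ∀ z, ¬ IsCentralElem (m z)) (g k : G) :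
    upLog (m (g * k)) = upLog (m g) + upLog (m k) := by
  rw [map_mul]
  conv_lhs => rw [← h.upExp_log g, ← h.upExp_log k]
  rw [← upExp_add _ _ (h.upComm hno g k), upLog_upExp]

noncomputable def DomRepU.logHom (h : DomRepU m) (hno : ∀ z, ¬ IsCentralElem (m z)) :
    Additive G →+ (Fin 6 → ℝ) :=
  AddMonoidHom.mk' (fun g => upLog (m g.toMul)) (fun a b => h.upLog_mul hno a.toMul b.toMul)

/-- The real span of the logarithms. -/
def logSpan (m : G →* M4) : Submodule ℝ (Fin 6 → ℝ) :=
  Submodule.span ℝ (Set.range fun g => upLog (m g))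

lemma upLog_mem (g : G) : upLog (m g) ∈ logSpan m := Submodule.subset_span ⟨g, rfl⟩

lemma DomRepU.upComm_span (h : DomRepU m) (hno : ∀ z, ¬ IsCentralElem (m z))
    {X Y : Fin 6 → ℝ} (hX : X ∈ logSpan m) (hY : Y ∈ logSpan m) : UpComm X Y := by
  have h1 : ∀ g, ∀ Y ∈ logSpan m, UpComm (upLog (m g)) Y := by
    intro g Y hY
    induction hY using Submodule.span_induction with
    | mem Y hY => obtain ⟨k, rfl⟩ := hY; exact h.upComm hno g k
    | zero => simp [UpComm]
    | add a b _ _ ha hb =>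
      obtain ⟨a1, a2, a3⟩ := ha
      obtain ⟨b1, b2, b3⟩ := hb
      simp only [UpComm, Pi.add_apply]
      refine ⟨by linarith, by linarith, by linarith⟩
    | smul r a _ ha =>
      obtain ⟨a1, a2, a3⟩ := ha
      simp only [UpComm, Pi.smul_apply, smul_eq_mul]
      refine ⟨by linear_combination r * a1, by linear_combination r * a2,
        by linear_combination r * a3⟩
  induction hX using Submodule.span_induction with
  | mem X hX => obtain ⟨k, rfl⟩ := hX; exact h1 k Y hY
  | zero => simp [UpComm]
  | add a b _ _ ha hb =>
    obtain ⟨a1, a2, a3⟩ := ha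
    obtain ⟨b1, b2, b3⟩ := hb
    simp only [UpComm, Pi.add_apply]
    refine ⟨by linarith, by linarith, by linarith⟩
  | smul r a _ ha =>
    obtain ⟨a1, a2, a3⟩ := ha
    simp only [UpComm, Pi.smul_apply, smul_eq_mul]
    refine ⟨by linear_combination r * a1, by linear_combination r * a2,
      by linear_combination r * a3⟩

lemma DomRepU.approx (h : DomRepU m) (hno : ∀ z, ¬ IsCentralElem (m z)) :
    ∃ R : ℝ, ∀ W ∈ logSpan m, ∃ g, ∃ r ∈ logSpan m, ‖r‖ ≤ R ∧ W = upLog (m g) + r := by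
  obtain ⟨f, hf, hspan, -⟩ := Submodule.exists_fun_fin_finrank_span_eq ℝ
    (Set.range fun g => upLog (m g))
  refine ⟨∑ i, ‖f i‖, fun W hW => ?_⟩
  rw [logSpan, ← hspan, Submodule.mem_span_range_iff_exists_fun] at hW
  obtain ⟨c, rfl⟩ := hW
  have hmem : ∑ i, ⌊c i⌋ • f i ∈ (h.logHom hno).range := by
    refine AddSubgroup.sum_mem _ fun i _ => AddSubgroup.zsmul_mem _ ?_ _
    obtain ⟨g, hg⟩ := hf i
    exact ⟨Additive.ofMul g, hg⟩
  obtain ⟨g, hg⟩ := hmem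
  refine ⟨g.toMul, ∑ i, Int.fract (c i) • f i, ?_, ?_, ?_⟩
  · refine Submodule.sum_mem _ fun i _ => Submodule.smul_mem _ _ ?_
    exact Submodule.subset_span (hf i)
  · refine (norm_sum_le _ _).trans (Finset.sum_le_sum fun i _ => ?_)
    rw [norm_smul, Real.norm_eq_abs, abs_of_nonneg (Int.fract_nonneg _)]
    exact mul_le_of_le_one_left (norm_nonneg _) (Int.fract_lt_one _).le
  · have : upLog (m g.toMul) = ∑ i, ⌊c i⌋ • f i := hg
    rw [this, ← Finset.sum_add_distrib]
    refine Finset.sum_congr rfl fun i _ => ?_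
    rw [← Int.cast_smul_eq_zsmul ℝ, ← add_smul, Int.floor_add_fract]

lemma DomRepU.realdom (h : DomRepU m) (hno : ∀ z, ¬ IsCentralElem (m z)) (W : ℕ → Fin 6 → ℝ)
    (hW : ∀ n, W n ∈ logSpan m) (hinf : Tendsto (fun n => ‖W n‖) atTop atTop) :
    Dom atTop (fun n => upExp (W n)) := by
  obtain ⟨R, hR⟩ := h.approx hno
  choose g r hr hrR hWr using fun n => hR (W n) (hW n)
  have hg : Tendsto g atTop cofinite := by
    rw [tendsto_def]
    intro s hs
    have hs' : (sᶜ).Finite := hs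
    have hfin : ((fun k => ‖upLog (m k)‖ + R) '' sᶜ).Finite := hs'.image _
    obtain ⟨B, hB⟩ := hfin.bddAbove
    filter_upwards [hinf.eventually_gt_atTop B] with n hn
    by_contra hmem
    have h1 := hB ⟨g n, hmem, rfl⟩
    have h2 : ‖W n‖ ≤ ‖upLog (m (g n))‖ + R := by
      rw [hWr n]; exact (norm_add_le _ _).trans (by linarith [hrR n])
    simp only at h1
    linarith
  have hd := h.dom.comp hg
  have heq : ∀ n, upExp (W n) = m (g n) * upExp (r n) := fun n => by
    rw [hWr n, upExp_add _ _ (h.upComm_span hno (upLog_mem _) (hr n)), h.upExp_log]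
  simp only [heq]
  refine hd.mul_right (fun i j => ?_) (fun n j hj => ?_) ?_
  · obtain ⟨C, hC⟩ := upExp_bounded R i j
    exact IsBigO.of_bound C (Eventually.of_forall fun n => by simpa using hC _ (hrR n))
  · fin_cases j <;> simp [upExp] at hj ⊢
  · have h33 : ∀ n, upExp (r n) 3 3 = 1 := fun n => by simp [upExp]
    simp only [h33]
    exact isBigO_refl _ _

lemma DomRepU.kernel [Infinite G] (h : DomRepU m) (hno : ∀ z, ¬ IsCentralElem (m z))
    (X : Fin 6 → ℝ) (hX : X ∈ logSpan m) (h2 : X 2 = 0) (h4 : X 4 = 0) : X = 0 := by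
  by_contra hne
  have hd := h.realdom hno (fun n => (n : ℝ) • X) (fun n => Submodule.smul_mem _ _ hX) (by
    simp only [norm_smul, Real.norm_natCast]
    exact tendsto_natCast_atTop_atTop.atTop_mul_const (norm_pos_iff.2 hne))
  have e03 : ∀ n : ℕ, upExp ((n : ℝ) • X) 0 3 = n * X 5 := fun n => by
    simp [upExp, h2, h4]
  have h5 : X 5 ≠ 0 := by
    intro h0
    obtain ⟨n, hn⟩ := (hd.2.bound (show (0:ℝ) < 1 by norm_num)).exists
    beta_reduce at hn
    rw [e03 n, h0] at hn
    norm_num at hn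
  have aux : ∀ i j, ¬(i = 0 ∧ j = 3) → ∀ r : ℝ, (∀ n : ℕ, upExp ((n : ℝ) • X) i j = n * r) →
      r = 0 := by
    intro i j hij r hr
    have h1 := hd.1 i j hij
    have h2 : (fun n : ℕ => (r / X 5) * upExp ((n : ℝ) • X) 0 3) =o[atTop]
        (fun n : ℕ => upExp ((n : ℝ) • X) 0 3) := by
      refine h1.congr_left fun n => ?_
      show upExp ((n : ℝ) • X) i j = _
      rw [hr, e03]
      field_simp
    have := isLittleO_smul_self hd.2 h2
    rw [div_eq_zero_iff] at this
    exact this.resolve_right h5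
  have h0 : X 0 = 0 := aux 0 1 (by decide) _ fun n => by simp [upExp]
  have h1 : X 1 = 0 := aux 1 2 (by decide) _ fun n => by simp [upExp]
  have h3 : X 3 = 0 := aux 0 2 (by decide) _ fun n => by simp [upExp, h0]
  have hall : ∀ g, ∀ i, i ≠ 5 → upLog (m g) i = 0 := by
    intro g i hi
    by_contra hY
    set Y := upLog (m g) with hYdef
    let c : ℕ → ℝ := fun n => upExp ((n : ℝ) • Y) 0 3
    have hXi : X i = 0 := by fin_cases i <;> first | assumption | exact absurd rfl hi
    have := h.realdom hno (fun n => (n : ℝ) • Y + (-(c n) / X 5) • X)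
      (fun n => Submodule.add_mem _ (Submodule.smul_mem _ _ (upLog_mem g))
        (Submodule.smul_mem _ _ hX)) (by
      refine tendsto_atTop_mono (fun n => norm_le_pi_norm _ i) ?_
      simp only [Pi.add_apply, Pi.smul_apply, hXi, smul_eq_mul, mul_zero, add_zero, norm_mul,
        Real.norm_natCast]
      exact tendsto_natCast_atTop_atTop.atTop_mul_const (norm_pos_iff.2 hY))
    obtain ⟨n, hn⟩ := (this.2.bound (show (0:ℝ) < 1 by norm_num)).exists
    have hz : upExp ((n : ℝ) • Y + (-(c n) / X 5) • X) 0 3 = 0 := by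
      simp only [c]
      simp [upExp, h0, h1, h2, h3, h4]
      field_simp
      ring
    beta_reduce at hn
    rw [hz] at hn
    norm_num at hn
  have hone : ∀ g, m g = 1 := fun g => h.eq_one hno g (by simpa [upLog] using hall g 0 (by decide))
    (by simpa [upLog] using hall g 1 (by decide)) (by simpa [upLog] using hall g 2 (by decide))
  have := h.finite_le 0
  simp only [hone] at this
  simp at this
  exact Set.infinite_univ this

lemma DomRepU.proper [Infinite G] (h : DomRepU m) (hno : ∀ z, ¬ IsCentralElem (m z)) (D : ℝ) :
    {g | ‖((upLog (m g) 2, upLog (m g) 4) : ℝ × ℝ)‖ ≤ D}.Finite := by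
  let f : logSpan m →ₗ[ℝ] ℝ × ℝ :=
    ((LinearMap.proj 2).prod (LinearMap.proj 4)).comp (logSpan m).subtype
  have hf : LinearMap.ker f = ⊥ := by
    rw [LinearMap.ker_eq_bot']
    intro X hX
    have h1 : ((X : Fin 6 → ℝ) 2, (X : Fin 6 → ℝ) 4) = ((0, 0) : ℝ × ℝ) := hX
    rw [Prod.mk.injEq] at h1
    exact Subtype.ext (h.kernel hno X X.2 h1.1 h1.2)
  obtain ⟨K, -, hK⟩ := f.exists_antilipschitzWith hf
  obtain ⟨C, hC⟩ := upExp_bounded (K * D) 0 3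
  refine (h.finite_le C).subset fun g hg => ?_
  have h1 := hK.le_mul_dist ⟨_, upLog_mem (m := m) g⟩ 0
  rw [map_zero, dist_zero_right, dist_zero_right] at h1
  have h2 : |upExp (upLog (m g)) 0 3| ≤ C := hC _ (h1.trans (by
    refine mul_le_mul_of_nonneg_left hg K.2))
  rwa [h.upExp_log] at h2

theorem DomRepU.VZ [Infinite G] (h : DomRepU m) : VZ G := by
  by_cases hno : ∀ z, ¬ IsCentralElem (m z)
  · exact VZ_of_proper (fun g => (upLog (m g) 2, upLog (m g) 4))
      (fun g k => by rw [h.upLog_mul hno]; rfl) (h.proper hno)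
  · push Not at hno
    obtain ⟨z, hz⟩ := hno
    exact VZ_of_central h.toDomRep1 z hz

end unip

lemma finiteIndex_ker_of_finite {G M : Type*} [Group G] [Monoid M] (f : G →* M)
    (h : (Set.range f).Finite) : f.ker.FiniteIndex := by
  let F : G →* Mˣ := f.toHomUnits
  have hF : ∀ g, (F g : M) = f g := fun g => rfl
  have hfin : Finite F.range := by
    have : (Set.range F).Finite := by
      refine Set.Finite.of_finite_image (f := fun u : Mˣ => (u : M)) (h.subset ?_)
        (Units.val_injective.injOn)
      rintro _ ⟨_, ⟨g, rfl⟩, rfl⟩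
      exact ⟨g, rfl⟩
    exact this.to_subtype
  have : F.ker = f.ker := by
    ext g
    rw [MonoidHom.mem_ker, MonoidHom.mem_ker, ← hF g, Units.ext_iff]; rfl
  rw [← this]
  infer_instance

lemma infinite_of_finiteIndex {G : Type*} [Group G] [Infinite G] (K : Subgroup G)
    (hK : K.FiniteIndex) : Infinite K := by
  by_contra hfin
  rw [not_infinite_iff_finite] at hfin
  have : Finite (G ⧸ K) := Subgroup.finiteIndex_iff_finite_quotient.1 hK
  have e := Subgroup.groupEquivQuotientProdSubgroup (s := K)
  exact not_finite_iff_infinite.2 ‹Infinite G› (Finite.of_equiv _ e.symm)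

section tri
variable {G : Type*} [Group G] {m : G →* M4}

lemma DomRep1.subgroup (h : DomRep1 m) (K : Subgroup G) : DomRep1 (m.comp K.subtype) :=
  ⟨h.toDomRep.subgroup K, fun g => h.e00 g, fun g => h.e33 g⟩

lemma DomRep1.conj (h : DomRep1 m) (S S' : M4) (hS : S * S' = 1)
    (hc : ∀ i, i ≠ 0 → S i 0 = 0) (hc' : ∀ i, i ≠ 0 → S' i 0 = 0)
    (hr : ∀ j, j ≠ 3 → S 3 j = 0) (hr' : ∀ j, j ≠ 3 → S' 3 j = 0) :
    DomRep1 (conjHom m S S' hS) := by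
  refine ⟨h.toDomRep.conj S S' hS hc hc' hr hr', fun g => ?_, fun g => ?_⟩
  · have h1 := congrFun (congrFun hS 0) 0
    have h2 := h.col g
    have h3 := h.e00 g
    simp [Matrix.mul_apply, Fin.sum_univ_four, hc'] at h1
    simp [conjHom, Matrix.mul_apply, Fin.sum_univ_four, hc', h2, h3, h1]
  · have h1 := congrFun (congrFun hS 3) 3
    have h2 := h.row g
    have h3 := h.e33 g
    simp [Matrix.mul_apply, Fin.sum_univ_four, hr] at h1
    simp [conjHom, Matrix.mul_apply, Fin.sum_univ_four, hr, h2, h3, h1]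

/-- Block diagonal matrix with the middle block given. -/
def bS (B : Matrix (Fin 2) (Fin 2) ℝ) : M4 :=
  !![1, 0, 0, 0; 0, B 0 0, B 0 1, 0; 0, B 1 0, B 1 1, 0; 0, 0, 0, 1]

lemma bS_mul (B B' : Matrix (Fin 2) (Fin 2) ℝ) (h : B * B' = 1) : bS B * bS B' = 1 := by
  have h1 := congrFun (congrFun h 0) 0
  have h2 := congrFun (congrFun h 0) 1
  have h3 := congrFun (congrFun h 1) 0
  have h4 := congrFun (congrFun h 1) 1
  simp [Matrix.mul_apply, Fin.sum_univ_two] at h1 h2 h3 h4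
  ext i j
  fin_cases i <;> fin_cases j <;> simp [bS, Matrix.mul_apply, Fin.sum_univ_four, *]

lemma DomRep1.conjB (h : DomRep1 m) (B B' : Matrix (Fin 2) (Fin 2) ℝ) (hB : B * B' = 1) :
    ∃ m' : G →* M4, ∃ h' : DomRep1 m', ∀ g, h'.mid g = B * h.mid g * B' := by
  refine ⟨conjHom m (bS B) (bS B') (bS_mul _ _ hB), h.conj _ _ _ ?_ ?_ ?_ ?_, ?_⟩
  · intro i hi; fin_cases i <;> simp [bS] at hi ⊢
  · intro i hi; fin_cases i <;> simp [bS] at hi ⊢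
  · intro i hi; fin_cases i <;> simp [bS] at hi ⊢
  · intro i hi; fin_cases i <;> simp [bS] at hi ⊢
  · intro g
    ext i j
    fin_cases i <;> fin_cases j <;>
      simp [DomRep.mid_apply, conjHom, bS, Matrix.mul_apply, Matrix.vecMul, dotProduct,
        Fin.sum_univ_four, Fin.sum_univ_two] <;> ring

lemma DomRep1.VZ_tri [Infinite G] (h : DomRep1 m) (h21 : ∀ g, m g 2 1 = 0) : VZ G := by
  have hd : ∀ g, m g 1 1 * m g 2 2 = 1 := fun g => by
    have := h.mid_det g
    simpa [DomRep.mid_apply, Matrix.det_fin_two, h21] using this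
  have ht : ∀ g, |m g 1 1 + m g 2 2| ≤ 2 := fun g => by
    simpa [DomRep.mid_apply] using h.trace_le g
  have heq : ∀ g, m g 1 1 = m g 2 2 := fun g => by
    have h1 := hd g
    have h2 : (m g 1 1 + m g 2 2) ^ 2 ≤ 2 ^ 2 := by
      rw [← sq_abs]; exact pow_le_pow_left₀ (abs_nonneg _) (ht g) 2
    have h3 : (m g 1 1 - m g 2 2) ^ 2 ≤ 0 := by nlinarith
    have := pow_eq_zero_iff (two_ne_zero) |>.1 (le_antisymm h3 (sq_nonneg _))
    linarith
  let f : G →* ℝ :=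
    { toFun := fun g => m g 1 1
      map_one' := by simp
      map_mul' := fun g k => by
        simp [map_mul, Matrix.mul_apply, Fin.sum_univ_four, h.col, h.row, h21] }
  have hfr : (Set.range f).Finite := by
    refine Set.Finite.subset (Set.toFinite {1, -1}) ?_
    rintro _ ⟨g, rfl⟩
    have h1 := hd g
    rw [← heq] at h1
    rcases mul_self_eq_one_iff.1 h1 with h | h
    · left; exact h
    · right; exact h
  have hfi := finiteIndex_ker_of_finite f hfr
  have := infinite_of_finiteIndex _ hfi
  refine VZ_of_subgroup f.ker hfi (DomRepU.VZ (m := m.comp f.ker.subtype)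
    ⟨h.subgroup _, fun g => g.2, fun g => ?_, fun g => h21 g⟩)
  have : m g 1 1 = 1 := g.2
  show m g 2 2 = 1
  rw [← heq, this]

lemma DomRep1.VZ_para [Infinite G] (h : DomRep1 m) (u : G) (h21 : m u 2 1 ≠ 0)
    (htr : (m u 1 1 + m u 2 2) ^ 2 = 4) : VZ G := by
  have hdet := h.mid_det u
  rw [Matrix.det_fin_two] at hdet
  simp [DomRep.mid_apply] at hdet
  set e := (m u 1 1 + m u 2 2) / 2 with he
  have hee : e * e = 1 := by rw [he]; linarith
  obtain ⟨v, hv, hev⟩ := exists_eigvec (h.mid u) e (by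
    rw [h.mid_det]; simp [DomRep.mid_apply]; rw [he]; linarith)
  set D := v 0 ^ 2 + v 1 ^ 2 with hD
  have hDpos : D ≠ 0 := by
    intro h0
    apply hv
    have h1 : v 0 = 0 := by nlinarith [sq_nonneg (v 0), sq_nonneg (v 1)]
    have h2 : v 1 = 0 := by nlinarith [sq_nonneg (v 0), sq_nonneg (v 1)]
    ext i; fin_cases i <;> simp [h1, h2]
  have e1 := congrFun hev 0
  have e2 := congrFun hev 1
  simp [DomRep.mid_apply, Matrix.mulVec, dotProduct, Fin.sum_univ_two] at e1 e2
  have hB : !![v 0 / D, v 1 / D; -v 1 / D, v 0 / D] * !![v 0, -v 1; v 1, v 0] =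
      (1 : Matrix (Fin 2) (Fin 2) ℝ) := by
    ext i j
    fin_cases i <;> fin_cases j <;> simp [Matrix.mul_apply, Fin.sum_univ_two] <;> field_simp <;>
      rw [hD] <;> ring
  obtain ⟨m', h', hm'⟩ := h.conjB _ _ hB
  have hmid := hm' u
  have k21 : m' u 2 1 = 0 := by
    have := congrFun (congrFun hmid 1) 0
    simp [DomRep.mid_apply, Matrix.mul_apply, Fin.sum_univ_two] at this
    rw [this]
    field_simp
    linear_combination v 0 * e2 - v 1 * e1
  have k11 : m' u 1 1 = e := by
    have := congrFun (congrFun hmid 0) 0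
    simp [DomRep.mid_apply, Matrix.mul_apply, Fin.sum_univ_two] at this
    rw [this]
    field_simp
    rw [hD]
    linear_combination v 0 * e1 + v 1 * e2
  have k22 : m' u 2 2 = e := by
    have hd := h'.mid_det u
    rw [Matrix.det_fin_two] at hd
    simp [DomRep.mid_apply, k21, k11] at hd
    have : e ≠ 0 := left_ne_zero_of_mul_eq_one hee
    exact mul_left_cancel₀ this (hd.trans hee.symm)
  have k12 : m' u 1 2 ≠ 0 := by
    intro h0
    have hs : h'.mid u = e • (1 : Matrix (Fin 2) (Fin 2) ℝ) := by
      ext i j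
      fin_cases i <;> fin_cases j <;> simp [DomRep.mid_apply, k11, k22, k21, h0]
    have h1 : h.mid u = !![v 0, -v 1; v 1, v 0] * h'.mid u *
        !![v 0 / D, v 1 / D; -v 1 / D, v 0 / D] := by
      rw [hmid]
      have hB2 := mul_eq_one_comm.1 hB
      calc h.mid u = 1 * h.mid u * 1 := by simp
        _ = _ := by rw [← hB2]; simp only [Matrix.mul_assoc]
    rw [hs, Matrix.mul_smul, Matrix.smul_mul, Matrix.mul_one, mul_eq_one_comm.1 hB] at h1
    have := congrFun (congrFun h1 1) 0
    simp [DomRep.mid_apply] at this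
    exact h21 this
  refine h'.VZ_tri fun g => ?_
  have hpow : ∀ n : ℕ, h'.mid (u ^ (2 * n)) = !![1, 2 * n * (e * m' u 1 2); 0, 1] := by
    intro n
    induction n with
    | zero => ext i j; fin_cases i <;> fin_cases j <;> simp
    | succ n ih =>
      rw [mul_add, mul_one, pow_add, map_mul, ih, map_pow, h'.mid_apply u, k11, k22, k21]
      ext i j
      fin_cases i <;> fin_cases j <;> simp [pow_two, hee]
      ring
  by_contra hne
  have hb : ∀ n : ℕ, |m' g 1 1 + m' g 2 2 + 2 * n * (e * m' u 1 2) * m' g 2 1| ≤ 2 := fun n => by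
    have := h'.trace_le (u ^ (2 * n) * g)
    rw [map_mul, hpow] at this
    simp [DomRep.mid_apply, Matrix.mul_apply, Fin.sum_univ_two] at this
    convert this using 2
    ring
  have hX : e * m' u 1 2 * m' g 2 1 ≠ 0 :=
    mul_ne_zero (mul_ne_zero (left_ne_zero_of_mul_eq_one hee) k12) hne
  obtain ⟨n, hn⟩ := exists_nat_gt (4 / |e * m' u 1 2 * m' g 2 1|)
  rw [div_lt_iff₀ (abs_pos.2 hX)] at hn
  have b0 := hb 0
  have bn := hb n
  simp at b0
  have : |(2 * n : ℝ) * (e * m' u 1 2 * m' g 2 1)| ≤ 4 := by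
    rw [abs_le] at b0 bn ⊢
    constructor <;> nlinarith
  rw [abs_mul, abs_of_nonneg (by positivity)] at this
  nlinarith [abs_nonneg (e * m' u 1 2 * m' g 2 1)]

end tri

/-- The middle block consists of rotations. -/
structure DomRepE {G : Type*} [Group G] (m : G →* M4) : Prop extends DomRep1 m where
  r22 : ∀ g, m g 2 2 = m g 1 1
  r12 : ∀ g, m g 1 2 = - m g 2 1

section ell
variable {G : Type*} [Group G] {m : G →* M4}

lemma DomRepE.rdet (h : DomRepE m) (g : G) : m g 1 1 ^ 2 + m g 2 1 ^ 2 = 1 := by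
  have hd := h.mid_det g
  rw [Matrix.det_fin_two] at hd
  simp [DomRep.mid_apply, h.r22, h.r12] at hd
  linarith

lemma DomRepE.mid_comm (h : DomRepE m) (g k : G) : h.mid (g * k) = h.mid (k * g) := by
  rw [map_mul, map_mul]
  ext i j
  fin_cases i <;> fin_cases j <;>
    simp [DomRep.mid_apply, Matrix.mul_apply, Fin.sum_univ_two, h.r22, h.r12] <;> ring

lemma DomRepE.ker_domRepU (h : DomRepE m) : DomRepU (m.comp h.mid.ker.subtype) := by
  have key : ∀ g : h.mid.ker, h.mid g = 1 := fun g => g.2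
  refine ⟨h.toDomRep1.subgroup _, fun g => ?_, fun g => ?_, fun g => ?_⟩
  · have := congrFun (congrFun (key g) 0) 0
    simpa [DomRep.mid_apply] using this
  · have := congrFun (congrFun (key g) 1) 1
    simpa [DomRep.mid_apply] using this
  · have := congrFun (congrFun (key g) 1) 0
    simpa [DomRep.mid_apply] using this

lemma DomRepE.VZ_trivial [Infinite G] (h : DomRepE m) (h0 : G) (h21 : m h0 2 1 ≠ 0)
    (z01 : m h0 0 1 = 0) (z02 : m h0 0 2 = 0) (z13 : m h0 1 3 = 0) (z23 : m h0 2 3 = 0)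
    (hN : ∀ n, h.mid n = 1 → m n = 1) : VZ G := by
  have hcomm : ∀ g, m g * m h0 = m h0 * m g := by
    intro g
    have h1 : h.mid (g * h0 * (h0 * g)⁻¹) = 1 := by
      have h2 : h.mid (g * h0 * (h0 * g)⁻¹) = h.mid (h0 * g) * h.mid (h0 * g)⁻¹ := by
        rw [map_mul, h.mid_comm g h0]
      rw [h2, ← map_mul, mul_inv_cancel, map_one]
    have h3 := hN _ h1
    have h4 : m (g * h0 * (h0 * g)⁻¹ * (h0 * g)) = m (h0 * g) := by rw [map_mul, h3, one_mul]
    rw [inv_mul_cancel_right] at h4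
    rwa [← map_mul, ← map_mul]
  have hz : ∀ g, (m g 0 1 = 0 ∧ m g 0 2 = 0) ∧ m g 1 3 = 0 ∧ m g 2 3 = 0 := by
    intro g
    have c := hcomm g
    have c01 := congrFun (congrFun c 0) 1
    have c02 := congrFun (congrFun c 0) 2
    have c13 := congrFun (congrFun c 1) 3
    have c23 := congrFun (congrFun c 2) 3
    simp only [Matrix.mul_apply, Fin.sum_univ_four, z01, z02, z13, z23, h.e00, h.e33, h.r22, h.r12,
      h.row _ 2 (show (2 : Fin 4) ≠ 3 by decide), h.row _ 1 (show (1 : Fin 4) ≠ 3 by decide),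
      h.col _ 1 (show (1 : Fin 4) ≠ 0 by decide),
      h.col _ 2 (show (2 : Fin 4) ≠ 0 by decide)] at c01 c02 c13 c23
    have hs : m h0 2 1 ^ 2 > 0 := by positivity
    have aux : ∀ x y a s : ℝ, s ^ 2 > 0 → x * a + y * s = x → x * (-s) + y * a = y → x = 0 ∧ y = 0 := by
      intro x y a s hs h1 h2
      have h3 : (x ^ 2 + y ^ 2) * s ^ 2 = 0 := by
        have e1 : x * (a - 1) = - y * s := by linarith
        have e2 : y * (a - 1) = x * s := by linarith
        have e3 : x * (x * (a - 1)) + y * (y * (a - 1)) = 0 := by rw [e1, e2]; ring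
        have e4 : (x ^ 2 + y ^ 2) * (a - 1) = 0 := by linarith
        rcases mul_eq_zero.1 e4 with e | e
        · rw [e]; ring
        · rw [e] at e1 e2
          have : y * s = 0 := by linarith
          have h' : x * s = 0 := by linarith
          linear_combination x * s * h' + y * s * this
      have h4 := (mul_eq_zero.1 h3).resolve_right hs.ne'
      exact ⟨(pow_eq_zero_iff two_ne_zero).1 (by linarith [sq_nonneg x, sq_nonneg y]),
        (pow_eq_zero_iff two_ne_zero).1 (by linarith [sq_nonneg x, sq_nonneg y])⟩
    refine ⟨aux _ _ (m h0 1 1) _ hs (by linarith) (by linarith), ?_⟩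
    have := aux (m g 1 3) (m g 2 3) (m h0 1 1) (-m h0 2 1) (by simpa using hs) (by linarith)
      (by linarith)
    exact this
  refine VZ_of_proper (fun g => (m g 0 3, 0)) (fun g k => ?_) (fun D => ?_)
  · rw [map_mul]
    simp [Matrix.mul_apply, Fin.sum_univ_four, h.e00, h.e33, hz]
    ring
  · refine (h.finite_le D).subset fun g hg => ?_
    simpa [Prod.norm_def] using hg

lemma DomRepE.VZ_nontrivial [Infinite G] (h : DomRepE m) (hno : ∀ z, ¬ IsCentralElem (m z))
    (n : G) (hn : h.mid n = 1) (hn1 : m n ≠ 1) : VZ G := by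
  set N := h.mid.ker with hN
  have hU := h.ker_domRepU
  have hno' : ∀ z, ¬ IsCentralElem ((m.comp N.subtype) z) := fun z => hno z
  have hNinf : Infinite N := by
    by_contra hfin
    rw [not_infinite_iff_finite] at hfin
    apply hn1
    have h1 : (hU.logHom hno') (Additive.ofMul ⟨n, hn⟩) = 0 := by
      have h2 : Nat.card N • (hU.logHom hno') (Additive.ofMul ⟨n, hn⟩) = 0 := by
        rw [← map_nsmul, ← ofMul_pow, pow_card_eq_one', ofMul_one, map_zero]
      exact (smul_eq_zero.1 h2).resolve_left Nat.card_pos.ne'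
    have h3 : upLog (m n) = 0 := h1
    have h4 := hU.upExp_log ⟨n, hn⟩
    have h5 : upExp (upLog (m n)) = m n := h4
    rw [← h5, h3]
    ext i j; fin_cases i <;> fin_cases j <;> simp [upExp]
  have entries : ∀ k, h.mid k = 1 → m k 1 1 = 1 ∧ m k 1 2 = 0 ∧ m k 2 1 = 0 ∧ m k 2 2 = 1 := by
    intro k hk
    have a1 := congrFun (congrFun hk 0) 0
    have a2 := congrFun (congrFun hk 0) 1
    have a3 := congrFun (congrFun hk 1) 0
    have a4 := congrFun (congrFun hk 1) 1
    simp [DomRep.mid_apply] at a1 a2 a3 a4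
    exact ⟨a1, a2, a3, a4⟩
  have hd : ¬ (m n 1 3 = 0 ∧ m n 2 3 = 0) := by
    rintro ⟨d1, d2⟩
    apply hn1
    have h3 : upLog (m n) = 0 := hU.kernel hno' _ (upLog_mem (m := m.comp N.subtype) ⟨n, hn⟩)
      (by simpa [upLog] using d2) (by simp [upLog, d1, d2])
    have h5 : upExp (upLog (m n)) = m n := hU.upExp_log ⟨n, hn⟩
    rw [← h5, h3]
    ext i j; fin_cases i <;> fin_cases j <;> simp [upExp]
  have hker : ∀ g, h.mid (g * n * g⁻¹) = 1 := fun g => by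
    rw [map_mul, map_mul, hn, mul_one, ← map_mul, mul_inv_cancel, map_one]
  have hact : ∀ g, m (g * n * g⁻¹) 1 3 = m g 1 1 * m n 1 3 - m g 2 1 * m n 2 3 ∧
      m (g * n * g⁻¹) 2 3 = m g 2 1 * m n 1 3 + m g 1 1 * m n 2 3 := by
    intro g
    have e : m (g * n * g⁻¹) * m g = m g * m n := by
      rw [← map_mul, ← map_mul, inv_mul_cancel_right]
    obtain ⟨b1, b2, b3, b4⟩ := entries _ (hker g)
    have e1 := congrFun (congrFun e 1) 3
    have e2 := congrFun (congrFun e 2) 3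
    simp only [Matrix.mul_apply, Fin.sum_univ_four, b1, b2, b3, b4, h.e33, h.r12, h.r22,
      h.col _ 1 (show (1 : Fin 4) ≠ 0 by decide),
      h.col _ 2 (show (2 : Fin 4) ≠ 0 by decide)] at e1 e2
    constructor <;> linarith
  set D := m n 1 3 ^ 2 + m n 2 3 ^ 2 with hD
  have hDpos : D ≠ 0 := by
    intro h0
    apply hd
    constructor <;> nlinarith [sq_nonneg (m n 1 3), sq_nonneg (m n 2 3)]
  have hfin := hU.proper hno' (D + 1)
  have hrange : (Set.range h.mid).Finite := by
    let F : N → Matrix (Fin 2) (Fin 2) ℝ := fun k =>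
      !![(m k 1 3 * m n 1 3 + m k 2 3 * m n 2 3) / D, -(m k 2 3 * m n 1 3 - m k 1 3 * m n 2 3) / D;
        (m k 2 3 * m n 1 3 - m k 1 3 * m n 2 3) / D, (m k 1 3 * m n 1 3 + m k 2 3 * m n 2 3) / D]
    refine (hfin.image F).subset ?_
    rintro _ ⟨g, rfl⟩
    obtain ⟨a1, a2⟩ := hact g
    obtain ⟨b1, b2, b3, b4⟩ := entries _ (hker g)
    have hdg := h.rdet g
    refine ⟨⟨g * n * g⁻¹, hker g⟩, ?_, ?_⟩
    · have hsum : m (g * n * g⁻¹) 1 3 ^ 2 + m (g * n * g⁻¹) 2 3 ^ 2 = D := by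
        rw [a1, a2, hD]
        linear_combination (m n 1 3 ^ 2 + m n 2 3 ^ 2) * hdg
      have aux : ∀ x y : ℝ, x ^ 2 + y ^ 2 = D → |x| ≤ D + 1 := by
        intro x y hxy
        rw [abs_le]
        constructor <;> nlinarith [sq_nonneg x, sq_nonneg y, sq_nonneg (x - 1), sq_nonneg (x + 1)]
      show ‖((upLog (m (g * n * g⁻¹)) 2, upLog (m (g * n * g⁻¹)) 4) : ℝ × ℝ)‖ ≤ D + 1
      rw [Prod.norm_def, max_le_iff]
      have u2 : upLog (m (g * n * g⁻¹)) 2 = m (g * n * g⁻¹) 2 3 := by simp [upLog]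
      have u4 : upLog (m (g * n * g⁻¹)) 4 = m (g * n * g⁻¹) 1 3 := by simp only [upLog, b2]; simp
      rw [u2, u4]
      exact ⟨aux _ _ ((add_comm _ _).trans hsum), aux _ _ hsum⟩
    · have f1 : (m (g * n * g⁻¹) 1 3 * m n 1 3 + m (g * n * g⁻¹) 2 3 * m n 2 3) / D = m g 1 1 := by
        rw [a1, a2, div_eq_iff hDpos, hD]; ring
      have f2 : (m (g * n * g⁻¹) 2 3 * m n 1 3 - m (g * n * g⁻¹) 1 3 * m n 2 3) / D = m g 2 1 := by
        rw [a1, a2, div_eq_iff hDpos, hD]; ring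
      rw [h.mid_apply g, h.r22, h.r12]
      simp only [F]
      rw [f1, neg_div, f2]
  exact VZ_of_subgroup N (finiteIndex_ker_of_finite _ hrange) hU.VZ

lemma DomRepE.VZ [Infinite G] (h : DomRepE m) (h0 : G) (h21 : m h0 2 1 ≠ 0) : VZ G := by
  set κ := m h0 1 1 with hκ
  set σ := m h0 2 1 with hσ
  have h12 : m h0 1 2 = -σ := h.r12 h0
  have h22 : m h0 2 2 = κ := h.r22 h0
  set Δ := (1 - κ) ^ 2 + σ ^ 2 with hΔ
  have hΔ0 : Δ ≠ 0 := by
    have : 0 < σ ^ 2 := by positivity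
    have := sq_nonneg (1 - κ)
    rw [hΔ]; linarith
  obtain ⟨p1, p2, q1, q2, w⟩ : ∃ p1 p2 q1 q2 : ℝ, (m h0 0 1 + p1 * κ + p2 * σ - p1 = 0 ∧
      m h0 0 2 - p1 * σ + p2 * κ - p2 = 0) ∧ m h0 1 3 + q1 - κ * q1 + σ * q2 = 0 ∧
      m h0 2 3 + q2 - σ * q1 - κ * q2 = 0 := by
    refine ⟨(m h0 0 1 * (1 - κ) + m h0 0 2 * σ) / Δ, (- m h0 0 1 * σ + m h0 0 2 * (1 - κ)) / Δ,
      (- m h0 1 3 * (1 - κ) + m h0 2 3 * σ) / Δ, (- m h0 1 3 * σ - m h0 2 3 * (1 - κ)) / Δ, ⟨?_, ?_⟩, ?_, ?_⟩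
    all_goals field_simp; rw [hΔ]; ring
  obtain ⟨⟨w1, w2⟩, w3, w4⟩ := w
  let S : M4 := !![1, p1, p2, 0; 0, 1, 0, q1; 0, 0, 1, q2; 0, 0, 0, 1]
  let S' : M4 := !![1, -p1, -p2, p1 * q1 + p2 * q2; 0, 1, 0, -q1; 0, 0, 1, -q2; 0, 0, 0, 1]
  have hS : S * S' = 1 := by
    ext i j
    fin_cases i <;> fin_cases j <;> simp [S, S', Matrix.mul_apply, Fin.sum_univ_four]
  have h' : DomRep1 (conjHom m S S' hS) := by
    refine h.toDomRep1.conj _ _ _ ?_ ?_ ?_ ?_ <;>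
    · intro i hi; fin_cases i <;> simp [S, S'] at hi ⊢
  have hrow : ∀ g, m g 3 0 = 0 ∧ m g 3 1 = 0 ∧ m g 3 2 = 0 := fun g =>
    ⟨h.row g 0 (by decide), h.row g 1 (by decide), h.row g 2 (by decide)⟩
  have hcol : ∀ g, m g 1 0 = 0 ∧ m g 2 0 = 0 := fun g =>
    ⟨h.col g 1 (by decide), h.col g 2 (by decide)⟩
  have ent : ∀ g, (conjHom m S S' hS) g 1 1 = m g 1 1 ∧ (conjHom m S S' hS) g 1 2 = m g 1 2 ∧
      (conjHom m S S' hS) g 2 1 = m g 2 1 ∧ (conjHom m S S' hS) g 2 2 = m g 2 2 := by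
    intro g
    have hg := hrow g
    have hg' := hcol g
    simp [conjHom, S, S', Matrix.mul_apply, Matrix.vecMul, dotProduct, Fin.sum_univ_four, hg, hg']
  have hE : DomRepE (conjHom m S S' hS) := by
    refine ⟨h', fun g => ?_, fun g => ?_⟩
    · rw [(ent g).2.2.2, (ent g).1, h.r22]
    · rw [(ent g).2.1, (ent g).2.2.1, h.r12]
  have hg := hrow h0
  have hg' := hcol h0
  have g0 := h.e00 h0
  have g3 := h.e33 h0
  by_cases hno : ∀ z, ¬ IsCentralElem ((conjHom m S S' hS) z)
  · by_cases hN : ∀ n, hE.mid n = 1 → (conjHom m S S' hS) n = 1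
    · refine hE.VZ_trivial h0 (by rw [(ent h0).2.2.1]; exact h21) ?_ ?_ ?_ ?_ hN <;>
        simp [conjHom, S, S', Matrix.mul_apply, Matrix.vecMul, dotProduct, Fin.sum_univ_four, hg, hg',
          g0, g3, h12, h22, ← hκ, ← hσ]
      · linarith
      · linarith
      · linarith
      · linarith
    · push Not at hN
      obtain ⟨n, hn, hn1⟩ := hN
      exact hE.VZ_nontrivial hno n hn hn1
  · push Not at hno
    obtain ⟨z, hz⟩ := hno
    exact VZ_of_central h' z hz

lemma DomRep1.VZ_ell [Infinite G] (h : DomRep1 m) (u : G)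
    (htr : |m u 1 1 + m u 2 2| < 2) : VZ G := by
  have hdet := h.mid_det u
  rw [Matrix.det_fin_two] at hdet
  simp [DomRep.mid_apply] at hdet
  set κ := (m u 1 1 + m u 2 2) / 2 with hκ
  have hκ1 : 0 < 1 - κ ^ 2 := by
    rw [abs_lt] at htr
    rw [hκ]; nlinarith
  set σ := Real.sqrt (1 - κ ^ 2) with hσ
  have hσ2 : σ ^ 2 = 1 - κ ^ 2 := Real.sq_sqrt hκ1.le
  have hσ0 : 0 < σ := Real.sqrt_pos.2 hκ1
  have h21 : m u 2 1 ≠ 0 := by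
    intro h0
    rw [h0] at hdet
    have : (m u 1 1 - m u 2 2) ^ 2 < 0 := by rw [hκ] at hκ1; nlinarith
    linarith [sq_nonneg (m u 1 1 - m u 2 2)]
  have hm22 : m u 2 2 = 2 * κ - m u 1 1 := by rw [hκ]; ring
  have hB : !![1, -(m u 1 1 - κ) / m u 2 1; 0, σ / m u 2 1] *
      !![1, (m u 1 1 - κ) / σ; 0, m u 2 1 / σ] = (1 : Matrix (Fin 2) (Fin 2) ℝ) := by
    ext i j
    fin_cases i <;> fin_cases j <;> simp [Matrix.mul_apply, Fin.sum_univ_two] <;> field_simp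
    ring
  obtain ⟨m', h', hm'⟩ := h.conjB _ _ hB
  have hmid := hm' u
  rw [hm22] at hdet
  have k11 : m' u 1 1 = κ := by
    have := congrFun (congrFun hmid 0) 0
    simp [DomRep.mid_apply, Matrix.mul_apply, Fin.sum_univ_two] at this
    rw [this]; field_simp; ring
  have k21 : m' u 2 1 = σ := by
    have := congrFun (congrFun hmid 1) 0
    simp [DomRep.mid_apply, Matrix.mul_apply, Fin.sum_univ_two] at this
    rw [this]; field_simp
  have k22 : m' u 2 2 = κ := by
    have := congrFun (congrFun hmid 1) 1
    simp [DomRep.mid_apply, Matrix.mul_apply, Fin.sum_univ_two] at this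
    rw [this, hm22]; field_simp; ring
  have k12 : m' u 1 2 = -σ := by
    have hd := h'.mid_det u
    rw [Matrix.det_fin_two] at hd
    simp [DomRep.mid_apply, k21, k11, k22] at hd
    have : σ * (m' u 1 2 + σ) = 0 := by linear_combination hσ2 - hd
    have := (mul_eq_zero.1 this).resolve_left hσ0.ne'
    linarith
  have hinv : ∀ g, h'.mid g⁻¹ = !![m' g 2 2, - m' g 1 2; - m' g 2 1, m' g 1 1] := by
    intro g
    have hd := h'.mid_det g
    rw [Matrix.det_fin_two] at hd
    simp [DomRep.mid_apply] at hd
    have e1 : h'.mid g * !![m' g 2 2, - m' g 1 2; - m' g 2 1, m' g 1 1] = 1 := by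
      rw [h'.mid_apply]
      ext i j
      fin_cases i <;> fin_cases j <;> simp <;> linarith
    calc h'.mid g⁻¹ = h'.mid g⁻¹ * (h'.mid g * !![m' g 2 2, - m' g 1 2; - m' g 2 1, m' g 1 1]) := by
          rw [e1, mul_one]
      _ = _ := by rw [← mul_assoc, ← map_mul, inv_mul_cancel, map_one, one_mul]
  have key : ∀ g, m' g 2 2 = m' g 1 1 ∧ m' g 1 2 = - m' g 2 1 := by
    intro g
    have hd := h'.mid_det g
    rw [Matrix.det_fin_two] at hd
    simp [DomRep.mid_apply] at hd
    have ht := h'.trace_le (u * g * u⁻¹ * g⁻¹)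
    rw [map_mul, map_mul, map_mul, hinv, hinv, h'.mid_apply u, h'.mid_apply g, k11, k12, k21, k22] at ht
    simp [Matrix.mul_apply, Fin.sum_univ_two] at ht
    have ht2 := (abs_le.1 ht).2
    have h3 : 2 + σ ^ 2 * ((m' g 1 1 - m' g 2 2) ^ 2 + (m' g 1 2 + m' g 2 1) ^ 2) ≤ 2 := by
      refine le_trans (le_of_eq ?_) ht2
      linear_combination (-2 * (κ ^ 2 + σ ^ 2)) * hd - 2 * hσ2
    have h4 : (m' g 1 1 - m' g 2 2) ^ 2 + (m' g 1 2 + m' g 2 1) ^ 2 ≤ 0 := by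
      have : 0 < σ ^ 2 := by positivity
      nlinarith
    constructor <;> nlinarith [sq_nonneg (m' g 1 1 - m' g 2 2), sq_nonneg (m' g 1 2 + m' g 2 1)]
  exact DomRepE.VZ ⟨h', fun g => (key g).1, fun g => (key g).2⟩ u (by rw [k21]; exact hσ0.ne')

theorem DomRep.VZ [Infinite G] (h : DomRep m) : VZ G := by
  obtain ⟨K, hK, h1⟩ := h.exists_normalized
  have := infinite_of_finiteIndex K hK
  refine VZ_of_subgroup K hK ?_
  by_cases he : ∃ u : K, |(m.comp K.subtype) u 1 1 + (m.comp K.subtype) u 2 2| < 2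
  · obtain ⟨u, hu⟩ := he
    exact h1.VZ_ell u hu
  · push Not at he
    by_cases ht : ∀ g, (m.comp K.subtype) g 2 1 = 0
    · exact h1.VZ_tri ht
    · push Not at ht
      obtain ⟨u, hu⟩ := ht
      refine h1.VZ_para u hu ?_
      have h2 : |(m.comp K.subtype) u 1 1 + (m.comp K.subtype) u 2 2| = 2 :=
        le_antisymm (h1.trace_le u) (he u)
      rw [← sq_abs, h2]; norm_num

end ell

section topdyn
variable {Γ M : Type} [Group Γ] [TopologicalSpace M] [MulAction Γ M]

lemma ConvLocUnif.pt {g : ℕ → Γ} {a b z : M} (h : ConvLocUnif g a b) (hz : z ≠ b) :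
    Tendsto (fun n => g n • z) atTop (𝓝 a) := by
  intro U hU
  have := h {z} isCompact_singleton (by simpa using hz.symm) U hU
  exact mem_map.2 (this.mono fun n hn => hn z rfl)

lemma ConvLocUnif.sub {g : ℕ → Γ} {a b : M} (h : ConvLocUnif g a b) {φ : ℕ → ℕ}
    (hφ : Tendsto φ atTop atTop) : ConvLocUnif (fun n => g (φ n)) a b :=
  fun K hK hb U hU => hφ.eventually (h K hK hb U hU)

lemma ConvLocUnif.inv [CompactSpace M] [T2Space M] {g : ℕ → Γ} {a b : M}
    (h : ConvLocUnif g a b) : ConvLocUnif (fun n => (g n)⁻¹) b a := by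
  intro K hK ha U hU
  have h1 := h (interior U)ᶜ (isOpen_interior.isClosed_compl.isCompact)
    (by simpa using mem_interior_iff_mem_nhds.2 hU) Kᶜ (hK.isClosed.isOpen_compl.mem_nhds ha)
  filter_upwards [h1] with n hn z hz
  by_contra hc
  have := hn ((g n)⁻¹ • z) (fun h => hc (interior_subset h))
  rw [smul_inv_smul] at this
  exact this hz

lemma ConvLocUnif.fix [T2Space M] {g : ℕ → Γ} {a b x : M}
    (h : ConvLocUnif g a b) (hx : ∀ n, g n • x = x) (hb : b ≠ x) : a = x := by
  have := h.pt hb.symm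
  simp only [hx] at this
  exact tendsto_nhds_unique this tendsto_const_nhds

/-- A loxodromic element fixing `x` as attracting point. -/
lemma exists_lox [CompactSpace M] [T2Space M] (hperf : ∀ x : M, Filter.NeBot (𝓝[≠] x))
    (hconv : IsConvergenceAction Γ M) {x b : M} {g : ℕ → Γ} (hgx : ∀ n, g n • x = x)
    (hg : ConvLocUnif g x b) (hb : b ≠ x) :
    ∃ γ : Γ, γ • x = x ∧ (Function.Injective fun n : ℕ => γ ^ n) ∧
      ∃ b', b' ≠ x ∧ γ • b' = b' ∧ ConvLocUnif (fun n : ℕ => γ ^ n) x b' := by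
  obtain ⟨y, hyb, hyx⟩ : ∃ y : M, y ≠ b ∧ y ≠ x := by
    have h1 : ({b}ᶜ : Set M) ∈ 𝓝[≠] x :=
      mem_nhdsWithin_of_mem_nhds (isOpen_compl_singleton.mem_nhds hb.symm)
    have h2 : ({x}ᶜ : Set M) ∈ 𝓝[≠] x := self_mem_nhdsWithin
    obtain ⟨y, hy⟩ := (hperf x).nonempty_of_mem (inter_mem h1 h2)
    exact ⟨y, hy.1, hy.2⟩
  obtain ⟨U0, hxU0, hU0, V0, hbV0, hV0, hUV⟩ := exists_open_nhds_disjoint_closure hb.symm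
  set U := U0 ∩ {y}ᶜ with hU
  set V := V0 ∩ {y}ᶜ with hV
  have hUo : IsOpen U := hU0.inter isOpen_compl_singleton
  have hVo : IsOpen V := hV0.inter isOpen_compl_singleton
  have hxU : x ∈ U := ⟨hxU0, hyx.symm⟩
  have hbV : b ∈ V := ⟨hbV0, hyb.symm⟩
  have hdis : Disjoint (closure U) (closure V) :=
    hUV.mono (closure_mono Set.inter_subset_left) (closure_mono Set.inter_subset_left)
  obtain ⟨n0, hn0⟩ := (hg Vᶜ hVo.isClosed_compl.isCompact (by simpa using hbV) U
    (hUo.mem_nhds hxU)).exists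
  set γ := g n0 with hγ
  have hfix : ∀ n : ℕ, γ ^ n • x = x := by
    intro n
    induction n with
    | zero => simp
    | succ n ih => rw [pow_succ, mul_smul, hγ, hgx, ← hγ, ih]
  have hUV' : ∀ z ∈ U, z ∉ V := fun z hz hz' =>
    Set.disjoint_left.1 hdis (subset_closure hz) (subset_closure hz')
  have hmaps : ∀ n : ℕ, ∀ z, z ∉ V → γ ^ (n + 1) • z ∈ U := by
    intro n
    induction n with
    | zero => intro z hz; simpa using hn0 z hz
    | succ n ih =>
      intro z hz
      rw [pow_succ, mul_smul]
      exact ih _ (hUV' _ (hn0 z hz))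
  have hyU : y ∉ U := fun h => h.2 rfl
  have hyV : y ∉ V := fun h => h.2 rfl
  have hinj : Function.Injective fun n : ℕ => γ ^ n := by
    rcases pow_inj_or γ with h | ⟨n, hn, h⟩
    · exact h
    · exfalso
      obtain ⟨k, rfl⟩ := Nat.exists_eq_succ_of_ne_zero hn.ne'
      have := hmaps k y hyV
      rw [h, one_smul] at this
      exact hyU this
  have hbinv : ∀ n : ℕ, (γ ^ n)⁻¹ • b ∈ V := by
    intro n
    by_contra hc
    have h1 := hmaps n _ hc
    rw [pow_succ', mul_smul, smul_inv_smul] at h1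
    have h2 : b ∉ V → False := fun h => h hbV
    by_cases hn : n = 0
    · subst hn; simp at hc; exact hc hbV
    · obtain ⟨k, rfl⟩ := Nat.exists_eq_succ_of_ne_zero hn
      have := hmaps k _ hc
      rw [smul_inv_smul] at this
      exact hUV' _ this hbV
  have P : ∀ ψ : ℕ → ℕ, StrictMono ψ → ∃ φ : ℕ → ℕ, StrictMono φ ∧ ∃ b', b' ≠ x ∧ γ • b' = b' ∧
      ConvLocUnif (fun n => γ ^ (ψ (φ n))) x b' := by
    intro ψ hψ
    obtain ⟨φ, hφ, a', b', hab⟩ := hconv.2 (fun n => γ ^ ψ n) (hinj.comp hψ.injective)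
    have hb' : b' ≠ x := by
      intro hb'
      subst hb'
      have ha' : a' ∈ closure U := by
        refine mem_closure_of_tendsto (hab.pt hyx) ?_
        filter_upwards [(hψ.comp hφ).tendsto_atTop.eventually_ge_atTop 1] with n hn
        obtain ⟨k, hk⟩ := Nat.exists_eq_add_of_le' hn
        have hk' : ψ (φ n) = k + 1 := hk
        rw [hk']
        exact hmaps k y hyV
      have hba : b ≠ a' := fun h => Set.disjoint_left.1 hdis ha' (h ▸ subset_closure hbV)
      have h3 : b' ∈ closure V := mem_closure_of_tendsto (hab.inv.pt hba)
        (Eventually.of_forall fun n => hbinv _)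
      exact Set.disjoint_left.1 hdis (subset_closure hxU) h3
    have ha' : a' = x := hab.fix (fun n => hfix _) hb'
    subst ha'
    refine ⟨φ, hφ, b', hb', ?_, hab⟩
    have h1 := hab.inv.pt hb'
    have hx' : γ⁻¹ • b' ≠ a' := by
      intro h
      rw [inv_smul_eq_iff, hγ, hgx] at h
      exact hb' h
    have h2 := hab.inv.pt hx'
    have h3 := ((hconv.1 γ⁻¹).tendsto b').comp h1
    have h4 : γ⁻¹ • b' = b' := by
      refine tendsto_nhds_unique h3 (h2.congr fun n => ?_)
      simp only [Function.comp, smul_smul]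
      congr 1
      exact ((Commute.refl γ).pow_left _).inv_inv.eq
    rw [inv_smul_eq_iff] at h4
    exact h4.symm
  refine ⟨γ, by simpa using hfix 1, hinj, ?_⟩
  obtain ⟨φ, hφ, b', hb', hγb', hcv⟩ := P id strictMono_id
  refine ⟨b', hb', hγb', ?_⟩
  have hfixb : ∀ n : ℕ, γ ^ n • b' = b' := by
    intro n
    induction n with
    | zero => simp
    | succ n ih => rw [pow_succ, mul_smul, hγb', ih]
  intro K hK hbK W hW
  by_contra hne
  have hfr : ∃ᶠ n : ℕ in atTop, ¬ ∀ z ∈ K, γ ^ n • z ∈ W := not_eventually.1 hne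
  obtain ⟨ψ, hψ, hψ'⟩ := extraction_of_frequently_atTop hfr
  obtain ⟨φ', hφ', b'', hb'', hγb'', hcv'⟩ := P ψ hψ
  have hbb : b'' = b' := by
    by_contra hbb
    have h1 := hcv'.pt (z := b') (Ne.symm hbb)
    simp only [hfixb] at h1
    exact hb' (tendsto_nhds_unique tendsto_const_nhds h1)
  subst hbb
  obtain ⟨n, hn⟩ := (hcv' K hK hbK W hW).exists
  exact hψ' _ hn

lemma no_mixed [CompactSpace M] [T2Space M] (hperf : ∀ x : M, Filter.NeBot (𝓝[≠] x))
    (hconv : IsConvergenceAction Γ M) {x b : M} (hx : IsBoundedParabolicPoint Γ x)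
    {g : ℕ → Γ} (hgx : ∀ n, g n • x = x) (hg : ConvLocUnif g x b) (hb : b ≠ x) : False := by
  obtain ⟨γ, hγx, hinj, b', hb', hγb', hcv⟩ := exists_lox hperf hconv hgx hg hb
  obtain ⟨h, hhx, hhb⟩ : ∃ h : Γ, h • x = x ∧ h • b' ≠ b' := by
    by_contra hc
    push Not at hc
    exact hb' (hx.2.1 b' fun k hk => hc k hk)
  have hw : h • b' ≠ x := fun e => hb' (by
    rw [← hhx] at e; exact MulAction.injective h e)
  obtain ⟨y, hyb, hyx⟩ : ∃ y : M, y ≠ b' ∧ y ≠ x := by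
    have h1 : ({b'}ᶜ : Set M) ∈ 𝓝[≠] x :=
      mem_nhdsWithin_of_mem_nhds (isOpen_compl_singleton.mem_nhds hb'.symm)
    have h2 : ({x}ᶜ : Set M) ∈ 𝓝[≠] x := self_mem_nhdsWithin
    obtain ⟨y, hy⟩ := (hperf x).nonempty_of_mem (inter_mem h1 h2)
    exact ⟨y, hy.1, hy.2⟩
  obtain ⟨U, hxU, hUo, V, hbV, hVo, hUV⟩ := exists_open_nhds_disjoint_closure hb'.symm
  have hbU : b' ∉ closure U := fun hc => Set.disjoint_left.1 hUV hc (subset_closure hbV)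
  have hfixx : ∀ n : ℕ, γ ^ n • x = x := by
    intro n
    induction n with
    | zero => simp
    | succ n ih => rw [pow_succ, mul_smul, hγx, ih]
  have hfixx' : ∀ n : ℕ, (γ ^ n)⁻¹ • x = x := fun n => by rw [inv_smul_eq_iff, hfixx]
  have hfixb : ∀ n : ℕ, γ ^ n • b' = b' := by
    intro n
    induction n with
    | zero => simp
    | succ n ih => rw [pow_succ, mul_smul, hγb', ih]
  let z : ℕ → M := fun n => h • γ ^ n • y
  have hzx : ∀ n, z n ≠ x := by
    intro n e
    have e1 : h • γ ^ n • y = h • γ ^ n • x := by rw [hfixx, hhx]; exact e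
    exact hyx (MulAction.injective _ (MulAction.injective _ e1))
  have hzt : Tendsto z atTop (𝓝 x) := by
    have := ((hconv.1 h).tendsto x).comp (hcv.pt hyb)
    rwa [hhx] at this
  have hex : ∀ n, ∃ i : ℕ, (γ ^ i)⁻¹ • z n ∉ U := by
    intro n
    have h1 := hcv.inv.pt (hzx n)
    obtain ⟨i, hi⟩ := (h1.eventually (isClosed_closure.isOpen_compl.mem_nhds hbU)).exists
    exact ⟨i, fun hc => hi (subset_closure hc)⟩
  classical
  let mm : ℕ → ℕ := fun n => Nat.find (hex n)
  have hm1 : ∀ n, (γ ^ mm n)⁻¹ • z n ∉ U := fun n => Nat.find_spec (hex n)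
  have hm2 : ∀ n i, i < mm n → (γ ^ i)⁻¹ • z n ∈ U := fun n i hi => by
    have := Nat.find_min (hex n) hi
    simpa using this
  have hstay : ∀ i : ℕ, ∀ᶠ n in atTop, (γ ^ i)⁻¹ • z n ∈ U := by
    intro i
    have := ((hconv.1 (γ ^ i)⁻¹).tendsto x).comp hzt
    rw [hfixx'] at this
    exact this (hUo.mem_nhds hxU)
  have hmt : Tendsto mm atTop atTop := by
    rw [tendsto_atTop]
    intro N
    have h1 : ∀ᶠ n in atTop, ∀ i ∈ Finset.range N, (γ ^ i)⁻¹ • z n ∈ U :=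
      (Finset.eventually_all _).2 fun i _ => hstay i
    filter_upwards [h1] with n hn
    by_contra hc
    push Not at hc
    exact hm1 n (hn _ (Finset.mem_range.2 hc))
  let k : ℕ → Γ := fun n => (γ ^ mm n)⁻¹ * (h * γ ^ n)
  let C : Set M := Uᶜ ∩ (fun p => γ • p) ⁻¹' closure U
  have hCc : IsClosed C := hUo.isClosed_compl.inter (isClosed_closure.preimage (hconv.1 γ))
  have hxC : x ∉ C := fun hc => hc.1 hxU
  have hbC : b' ∉ C := fun hc => hbU (by have := hc.2; simpa [hγb'] using this)
  have hky : ∀ n, k n • y = (γ ^ mm n)⁻¹ • z n := fun n => by simp only [k, z, mul_smul]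
  have hkC : ∀ᶠ n in atTop, k n • y ∈ C := by
    filter_upwards [hmt.eventually_ge_atTop 1] with n hn
    rw [hky]
    refine ⟨hm1 n, subset_closure ?_⟩
    obtain ⟨j, hj⟩ := Nat.exists_eq_add_of_le' hn
    have := hm2 n j (by omega)
    have e : γ • (γ ^ mm n)⁻¹ • z n = (γ ^ j)⁻¹ • z n := by
      rw [smul_smul, hj, pow_succ, _root_.mul_inv_rev, mul_inv_cancel_left]
    show γ • (γ ^ mm n)⁻¹ • z n ∈ U
    rw [e]
    exact this
  have hkb : Tendsto (fun n => k n • b') atTop (𝓝 b') := by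
    have := (hcv.inv.sub hmt).pt hw
    refine this.congr fun n => ?_
    simp only [k, mul_smul, hfixb]
  have hkx : ∀ n, k n • x = x := fun n => by simp only [k, mul_smul, hfixx, hhx, hfixx']
  have hknot : ¬ Function.Injective k := by
    intro hkinj
    obtain ⟨φ, hφ, a2, b2, hab⟩ := hconv.2 k hkinj
    have hkC' := hφ.tendsto_atTop.eventually hkC
    have hkb' := hkb.comp hφ.tendsto_atTop
    by_cases hb2 : b2 = x
    · subst hb2
      have h1 := tendsto_nhds_unique (hab.pt hb') hkb'
      have h2 : a2 ∈ C := hCc.mem_of_tendsto (hab.pt hyx) hkC'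
      exact hbC (h1 ▸ h2)
    · have ha2 := hab.fix (fun n => hkx _) hb2
      subst ha2
      by_cases hbb : b' = b2
      · subst hbb
        exact hxC (hCc.mem_of_tendsto (hab.pt hyb) hkC')
      · exact hb' (tendsto_nhds_unique hkb' (hab.pt hbb))
  have hper : ∀ i j : ℕ, i < j → (γ ^ i)⁻¹ • h • b' = (γ ^ j)⁻¹ • h • b' → False := by
    intro i j hij e
    obtain ⟨d, rfl⟩ := Nat.exists_eq_add_of_lt hij
    have h1 : γ ^ (d + 1) • h • b' = h • b' := by
      rw [eq_inv_smul_iff, show i + d + 1 = (d + 1) + i by ring, pow_add, mul_smul,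
        smul_inv_smul] at e
      exact e
    have h2 : ∀ n : ℕ, γ ^ ((d + 1) * n) • h • b' = h • b' := by
      intro n
      induction n with
      | zero => simp
      | succ n ih => rw [mul_add, mul_one, pow_add, mul_smul, h1, ih]
    have h3 := (hcv.pt hhb).comp (tendsto_id.const_mul_atTop' (show 0 < d + 1 by omega))
    have h4 : Tendsto (fun _ : ℕ => h • b') atTop (𝓝 x) := h3.congr h2
    exact hw (tendsto_nhds_unique tendsto_const_nhds h4)
  apply hknot
  intro n n' hnn
  have hb2 : (γ ^ mm n)⁻¹ • h • b' = (γ ^ mm n')⁻¹ • h • b' := by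
    have : k n • b' = k n' • b' := by rw [hnn]
    simpa only [k, mul_smul, hfixb] using this
  rcases lt_trichotomy (mm n) (mm n') with hlt | heq | hgt
  · exact (hper _ _ hlt hb2).elim
  · have : (γ ^ mm n)⁻¹ * (h * γ ^ n) = (γ ^ mm n')⁻¹ * (h * γ ^ n') := hnn
    rw [heq] at this
    exact hinj (mul_left_cancel (mul_left_cancel this))
  · exact (hper _ _ hgt hb2.symm).elim

lemma parabolic_seq [CompactSpace M] [T2Space M] (hperf : ∀ x : M, Filter.NeBot (𝓝[≠] x))
    (hconv : IsConvergenceAction Γ M) {x : M} (hx : IsBoundedParabolicPoint Γ x)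
    (g : ℕ → Γ) (hgx : ∀ n, g n • x = x) (hg : Function.Injective g) :
    ∃ φ : ℕ → ℕ, StrictMono φ ∧ ConvLocUnif (fun n => g (φ n)) x x := by
  obtain ⟨φ, hφ, a, b, hab⟩ := hconv.2 g hg
  refine ⟨φ, hφ, ?_⟩
  by_cases hb : b = x
  · subst hb
    by_cases ha : a = b
    · subst ha; exact hab
    · exact (no_mixed hperf hconv hx (fun n => by rw [inv_smul_eq_iff, hgx]) hab.inv ha).elim
  · have ha := hab.fix (fun n => hgx _) hb
    subst ha
    exact (no_mixed hperf hconv hx (fun n => hgx _) hab hb).elim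

end topdyn

section anosov

lemma proj_limit {w : ℕ → Fin 4 → ℝ} (hw : ∀ n, w n ≠ 0) {v : Fin 4 → ℝ} (hv : v ≠ 0)
    (h : Tendsto (fun n => Projectivization.mk ℝ (w n) (hw n)) atTop
      (𝓝 (Projectivization.mk ℝ v hv)))
    (c : ℕ → ℝ) (w' : Fin 4 → ℝ) (hc : Tendsto (fun n => c n • w n) atTop (𝓝 w')) (i j : Fin 4) :
    w' i * v j = w' j * v i := by
  let f : {w : Fin 4 → ℝ // w ≠ 0} → ℝ := fun w => |w.1 i * v j - w.1 j * v i| / ‖w.1‖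
  have hf : ∀ (a b : {w : Fin 4 → ℝ // w ≠ 0}) (t : ℝ), (a : Fin 4 → ℝ) = t • (b : Fin 4 → ℝ) →
      f a = f b := by
    intro a b t hab
    have ht : t ≠ 0 := by
      rintro rfl
      exact a.2 (by simpa using hab)
    simp only [f, hab, Pi.smul_apply, smul_eq_mul, norm_smul]
    rw [mul_assoc, mul_assoc, ← mul_sub, abs_mul, Real.norm_eq_abs,
      mul_div_mul_left _ _ (abs_ne_zero.2 ht)]
  let F : Projectivization ℝ (Fin 4 → ℝ) → ℝ := Projectivization.lift f hf
  have hF : Continuous F := by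
    refine continuous_coinduced_dom.2 ?_
    show Continuous f
    have : Continuous fun w : {w : Fin 4 → ℝ // w ≠ 0} => w.1 := continuous_subtype_val
    refine Continuous.div ?_ this.norm fun w => norm_ne_zero_iff.2 w.2
    exact ((((continuous_apply i).comp this).mul continuous_const).sub
      (((continuous_apply j).comp this).mul continuous_const)).abs
  have h1 := (hF.tendsto _).comp h
  have hFv : F (Projectivization.mk ℝ v hv) = 0 := by
    show |v i * v j - v j * v i| / ‖v‖ = 0
    rw [mul_comm, sub_self]; simp
  rw [hFv] at h1
  have h2 : Tendsto (fun n => F (Projectivization.mk ℝ (w n) (hw n)) * ‖c n • w n‖) atTop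
      (𝓝 (0 * ‖w'‖)) := h1.mul hc.norm
  have h3 : Tendsto (fun n => |(c n • w n) i * v j - (c n • w n) j * v i|) atTop
      (𝓝 |w' i * v j - w' j * v i|) := by
    have a := (continuous_apply i).tendsto w' |>.comp hc
    have b := (continuous_apply j).tendsto w' |>.comp hc
    exact ((a.mul_const _).sub (b.mul_const _)).abs
  have h4 : ∀ n, F (Projectivization.mk ℝ (w n) (hw n)) * ‖c n • w n‖ =
      |(c n • w n) i * v j - (c n • w n) j * v i| := by
    intro n
    show |w n i * v j - w n j * v i| / ‖w n‖ * ‖c n • w n‖ = _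
    have := norm_ne_zero_iff.2 (hw n)
    simp only [Pi.smul_apply, smul_eq_mul, norm_smul]
    rw [mul_assoc, mul_assoc (c n), ← mul_sub, abs_mul, Real.norm_eq_abs]
    field_simp
  have h5 := tendsto_nhds_unique (h2.congr h4) h3
  rw [zero_mul] at h5
  have := abs_eq_zero.1 h5.symm
  linarith

/-- The sup norm of the entries. -/
noncomputable def nn (A : M4) : ℝ := ‖(fun i j => A i j : Fin 4 → Fin 4 → ℝ)‖

lemma nn_pos {A : M4} (h : A.det = 1) : 0 < nn A := by
  refine norm_pos_iff.2 fun h0 => ?_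
  have : A = 0 := by ext i j; exact congrFun (congrFun h0 i) j
  rw [this] at h
  simp at h

lemma mulVec_ne {A : M4} (h : A.det = 1) {u : Fin 4 → ℝ} (hu : u ≠ 0) : A *ᵥ u ≠ 0 := by
  intro h0
  have := Matrix.exists_mulVec_eq_zero_iff.1 ⟨u, hu, h0⟩
  linarith

lemma vecMul_ne {A : M4} (h : A.det = 1) {u : Fin 4 → ℝ} (hu : u ≠ 0) : u ᵥ* A ≠ 0 := by
  intro h0
  have := Matrix.exists_vecMul_eq_zero_iff.1 ⟨u, hu, h0⟩
  linarith

lemma limit_rank_one (A : ℕ → M4) (hA : ∀ n, (A n).det = 1) (v φ η : Fin 4 → ℝ) (hv : v ≠ 0)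
    (hφ : φ ≠ 0) (hη0 : η ≠ 0) (hη : η ⬝ᵥ v ≠ 0)
    (hdyn : ∀ u (hu : u ≠ 0), φ ⬝ᵥ u ≠ 0 →
      Tendsto (fun n => Projectivization.mk ℝ (A n *ᵥ u) (mulVec_ne (hA n) hu)) atTop
        (𝓝 (Projectivization.mk ℝ v hv)))
    (hdual : Tendsto (fun n => Projectivization.mk ℝ (η ᵥ* A n) (vecMul_ne (hA n) hη0)) atTop
        (𝓝 (Projectivization.mk ℝ φ hφ))) :
    ∃ θ : ℕ → ℕ, StrictMono θ ∧ ∃ s : ℝ, s ≠ 0 ∧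
      (∀ i j, Tendsto (fun n => A (θ n) i j / nn (A (θ n))) atTop (𝓝 (s * (v i * φ j)))) ∧
      Tendsto (fun n => nn (A (θ n))) atTop atTop := by
  let E : ℕ → Fin 4 → Fin 4 → ℝ := fun n => (nn (A n))⁻¹ • (fun i j => A n i j)
  have hE : ∀ n, ‖E n‖ = 1 := fun n => by
    have := nn_pos (hA n)
    rw [norm_smul, norm_inv, Real.norm_of_nonneg this.le]
    exact inv_mul_cancel₀ this.ne'
  obtain ⟨T, -, θ, hθ, hT⟩ := (isCompact_closedBall (0 : Fin 4 → Fin 4 → ℝ) 1).tendsto_subseq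
    (x := E) (fun n => by simp [hE])
  have hTn : ‖T‖ = 1 := by
    refine tendsto_nhds_unique hT.norm ?_
    simp [Function.comp_def, hE]
  have hTij : ∀ i j, Tendsto (fun n => (nn (A (θ n)))⁻¹ * A (θ n) i j) atTop (𝓝 (T i j)) := by
    intro i j
    exact ((continuous_apply j).tendsto _).comp (((continuous_apply i).tendsto _).comp hT)
  have hTu : ∀ u, φ ⬝ᵥ u ≠ 0 → ∀ i j, (∑ k, T i k * u k) * v j = (∑ k, T j k * u k) * v i := by
    intro u hu i j
    have hu0 : u ≠ 0 := by rintro rfl; simp at hu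
    have h1 := (hdyn u hu0 hu).comp hθ.tendsto_atTop
    refine proj_limit (w := fun n => A (θ n) *ᵥ u) (fun n => mulVec_ne (hA _) hu0) hv h1
      (fun n => (nn (A (θ n)))⁻¹) (fun i => ∑ k, T i k * u k) ?_ i j
    rw [tendsto_pi_nhds]
    intro i
    have : Tendsto (fun n => ∑ k, ((nn (A (θ n)))⁻¹ * A (θ n) i k) * u k) atTop
        (𝓝 (∑ k, T i k * u k)) := tendsto_finsetSum _ fun k _ => (hTij i k).mul_const _
    refine this.congr fun n => ?_
    simp [Matrix.mulVec, dotProduct, Finset.mul_sum, mul_assoc]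
  obtain ⟨l0, hl0⟩ : ∃ l, φ l ≠ 0 := Function.ne_iff.1 hφ
  obtain ⟨j0, hj0⟩ : ∃ j, v j ≠ 0 := Function.ne_iff.1 hv
  have hTu' : ∀ (u : Fin 4 → ℝ) i j, (∑ k, T i k * u k) * v j = (∑ k, T j k * u k) * v i := by
    intro u i j
    by_cases hu : φ ⬝ᵥ u = 0
    · have h1 := hTu (Pi.single l0 1) (by simpa using hl0) i j
      have h2 := hTu (u + Pi.single l0 1) (by rw [dotProduct_add, hu]; simpa using hl0) i j
      simp only [Pi.add_apply, mul_add, Finset.sum_add_distrib, add_mul] at h2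
      linarith
    · exact hTu u hu i j
  have hTk : ∀ i j k, T i k * v j = T j k * v i := by
    intro i j k
    simpa [Pi.single_apply] using hTu' (Pi.single k 1) i j
  have hψ : ∀ k l, (∑ i, η i * T i k) * φ l = (∑ i, η i * T i l) * φ k := by
    intro k l
    have h1 := hdual.comp hθ.tendsto_atTop
    refine proj_limit (w := fun n => η ᵥ* A (θ n)) (fun n => vecMul_ne (hA _) hη0) hφ h1
      (fun n => (nn (A (θ n)))⁻¹) (fun k => ∑ i, η i * T i k) ?_ k l
    rw [tendsto_pi_nhds]
    intro k
    have : Tendsto (fun n => ∑ i, η i * ((nn (A (θ n)))⁻¹ * A (θ n) i k)) atTop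
        (𝓝 (∑ i, η i * T i k)) := tendsto_finsetSum _ fun i _ => (hTij i k).const_mul _
    refine this.congr fun n => ?_
    simp only [Matrix.vecMul, dotProduct, Pi.smul_apply, smul_eq_mul, Finset.mul_sum]
    exact Finset.sum_congr rfl fun i _ => by ring
  have hηT : ∀ k, (∑ i, η i * T i k) * v j0 = (η ⬝ᵥ v) * T j0 k := by
    intro k
    rw [dotProduct, Finset.sum_mul, Finset.sum_mul]
    refine Finset.sum_congr rfl fun i _ => ?_
    have := hTk i j0 k
    linear_combination η i * this
  set s := T j0 l0 / (v j0 * φ l0) with hs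
  have hTform : ∀ i j, T i j = s * (v i * φ j) := by
    intro i j
    have h1 := hTk i j0 j
    have h2 : T j0 j * φ l0 = T j0 l0 * φ j := by
      have := hψ j l0
      have e1 := hηT j
      have e2 := hηT l0
      refine mul_left_cancel₀ hη ?_
      linear_combination φ j * e2 - φ l0 * e1 + v j0 * this
    rw [hs]
    field_simp
    linear_combination φ l0 * h1 + v i * h2
  have hs0 : s ≠ 0 := by
    intro h0
    have : T = 0 := by ext i j; rw [hTform, h0]; simp
    rw [this] at hTn; simp at hTn
  refine ⟨θ, hθ, s, hs0, fun i j => ?_, ?_⟩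
  · rw [← hTform]
    exact (hTij i j).congr fun n => by rw [div_eq_inv_mul]
  · have hdetT : (Matrix.of T).det = 0 := by
      have : Matrix.of T = vecMulVec (s • v) φ := by
        ext i j
        simp [vecMulVec, hTform, mul_assoc]
      rw [this, det_vecMulVec]
    have h1 : Tendsto (fun n => (Matrix.of (E (θ n))).det) atTop (𝓝 0) := by
      rw [← hdetT]
      have hc : Continuous fun X : Fin 4 → Fin 4 → ℝ => (Matrix.of X).det := by
        refine Continuous.matrix_det ?_
        exact continuous_id
      exact (hc.tendsto T).comp hT
    have h2 : ∀ n, (Matrix.of (E (θ n))).det = ((nn (A (θ n))) ^ 4)⁻¹ := by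
      intro n
      have : Matrix.of (E (θ n)) = (nn (A (θ n)))⁻¹ • A (θ n) := by ext i j; rfl
      rw [this, Matrix.det_smul, hA]
      simp
    simp only [h2] at h1
    have h3 : Tendsto (fun n => (nn (A (θ n))) ^ 4) atTop atTop := by
      have : Tendsto (fun n => (((nn (A (θ n))) ^ 4)⁻¹)⁻¹) atTop atTop := by
        refine tendsto_inv_nhdsGT_zero.comp (tendsto_nhdsWithin_iff.2 ⟨h1, ?_⟩)
        refine Eventually.of_forall fun n => ?_
        have := nn_pos (hA (θ n))
        rw [Set.mem_Ioi]
        positivity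
      simpa using this
    rw [tendsto_atTop]
    intro B
    filter_upwards [h3.eventually_gt_atTop (|B| ^ 4)] with n hn
    exact (le_abs_self B).trans (lt_of_pow_lt_pow_left₀ 4 (nn_pos (hA (θ n))).le hn).le

lemma Dom.of_limit {A : ℕ → M4} {r : ℕ → ℝ} (hr : Tendsto r atTop atTop) {t : ℝ} (ht : t ≠ 0)
    (h03 : Tendsto (fun n => A n 0 3 / r n) atTop (𝓝 t))
    (h : ∀ i j, ¬(i = 0 ∧ j = 3) → Tendsto (fun n => A n i j / r n) atTop (𝓝 0)) :
    Dom atTop A := by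
  have hr0 : ∀ᶠ n in atTop, r n ≠ 0 := hr.eventually_ne_atTop 0
  have hO : r =O[atTop] (fun n => A n 0 3) := by
    refine isBigO_of_div_tendsto_nhds ?_ t⁻¹ ?_
    · filter_upwards [h03.eventually_ne ht] with n hn h0
      rw [h0, zero_div] at hn
      exact absurd rfl hn
    · refine (h03.inv₀ ht).congr fun n => ?_
      simp
  refine ⟨fun i j hij => IsLittleO.trans_isBigO ?_ hO, IsLittleO.trans_isBigO ?_ hO⟩
  · refine (isLittleO_iff_tendsto' ?_).2 (h i j hij)
    filter_upwards [hr0] with n hn h0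
    exact absurd h0 hn
  · refine (isLittleO_iff_tendsto' ?_).2 (tendsto_const_nhds.div_atTop hr)
    filter_upwards [hr0] with n hn h0
    exact absurd h0 hn

lemma Dom.of_seq {G : Type*} (m : G → M4)
    (h : ∀ g : ℕ → G, Function.Injective g → ∃ θ : ℕ → ℕ, Dom atTop (fun n => m (g (θ n)))) :
    Dom cofinite m := by
  have key : ∀ f : G → ℝ, (∀ g : ℕ → G, Function.Injective g → ∃ θ : ℕ → ℕ,
      (fun n => f (g (θ n))) =o[atTop] (fun n => m (g (θ n)) 0 3)) →
      f =o[cofinite] (fun g => m g 0 3) := by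
    intro f hf
    rw [isLittleO_iff]
    intro ε hε
    rw [eventually_cofinite]
    by_contra hinf
    have hinf' : {g | ¬ ‖f g‖ ≤ ε * ‖m g 0 3‖}.Infinite := hinf
    let e := hinf'.natEmbedding
    obtain ⟨θ, hθ⟩ := hf (fun n => (e n : G)) (fun a b hab => e.injective (Subtype.ext hab))
    obtain ⟨n, hn⟩ := (hθ.bound hε).exists
    exact (e (θ n)).2 hn
  refine ⟨fun i j hij => key _ fun g hg => ?_, key _ fun g hg => ?_⟩
  · obtain ⟨θ, hθ⟩ := h g hg
    exact ⟨θ, hθ.1 i j hij⟩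
  · obtain ⟨θ, hθ⟩ := h g hg
    exact ⟨θ, hθ.2⟩

lemma exists_adapted (v φ : Fin 4 → ℝ) (hv : v ≠ 0) (hφ : φ ≠ 0) (h : φ ⬝ᵥ v = 0) :
    ∃ S S' : M4, S * S' = 1 ∧ ∃ a b : ℝ, a ≠ 0 ∧ b ≠ 0 ∧ (∀ i, S' i 0 = a * v i) ∧
      (∀ j, S 3 j = b * φ j) := by
  let v' : EuclideanSpace ℝ (Fin 4) := WithLp.toLp 2 v
  let φ' : EuclideanSpace ℝ (Fin 4) := WithLp.toLp 2 φ
  have hv' : v' ≠ 0 := fun h0 => hv (by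
    have := congrArg WithLp.ofLp h0; simpa [v'] using this)
  have hφ' : φ' ≠ 0 := fun h0 => hφ (by
    have := congrArg WithLp.ofLp h0; simpa [φ'] using this)
  have hin : inner ℝ v' φ' = 0 := by
    simpa [v', φ', EuclideanSpace.inner_eq_star_dotProduct] using h
  let w : Fin 4 → EuclideanSpace ℝ (Fin 4) := fun i => if i = 0 then ‖v'‖⁻¹ • v' else ‖φ'‖⁻¹ • φ'
  have hw : Orthonormal ℝ (({0, 3} : Set (Fin 4)).domRestrict w) := by
    constructor
    · rintro ⟨i, hi⟩
      rcases hi with rfl | hi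
      · simp [w, norm_smul, hv']
      · rw [Set.mem_singleton_iff] at hi
        subst hi
        simp [w, norm_smul, hφ']
    · rintro ⟨i, hi⟩ ⟨j, hj⟩ hij
      have hin' : inner ℝ φ' v' = 0 := by rw [real_inner_comm]; exact hin
      rcases hi with rfl | hi <;> rcases hj with rfl | hj
      · exact absurd rfl hij
      · rw [Set.mem_singleton_iff] at hj
        subst hj
        simp [w, inner_smul_left, inner_smul_right, hin]
      · rw [Set.mem_singleton_iff] at hi
        subst hi
        simp [w, inner_smul_left, inner_smul_right, hin']
      · rw [Set.mem_singleton_iff] at hi hj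
        subst hi; subst hj
        exact absurd rfl hij
  obtain ⟨b, hb⟩ := hw.exists_orthonormalBasis_extension_of_card_eq (by simp)
  have hb0 : b 0 = ‖v'‖⁻¹ • v' := by rw [hb 0 (by simp)]; simp [w]
  have hb3 : b 3 = ‖φ'‖⁻¹ • φ' := by rw [hb 3 (by simp)]; simp [w]
  refine ⟨Matrix.of fun i j => b i j, Matrix.of fun i j => b j i, ?_, ‖v'‖⁻¹, ‖φ'‖⁻¹,
    inv_ne_zero (norm_ne_zero_iff.2 hv'), inv_ne_zero (norm_ne_zero_iff.2 hφ'), ?_, ?_⟩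
  · ext i j
    have := orthonormal_iff_ite.1 b.orthonormal i j
    rw [Matrix.mul_apply, Matrix.one_apply, ← this]
    simp [PiLp.inner_apply, mul_comm]
  · intro i; simp [hb0, v']
  · intro i; simp [hb3, φ']

end anosov

section final
variable {Γ M : Type} [Group Γ] [TopologicalSpace M] [MulAction Γ M]

lemma anosov_limit [CompactSpace M] [T2Space M] {ρ : Γ →* Matrix.SpecialLinearGroup (Fin 4) ℝ}
    {ξ ξs : M → Projectivization ℝ (Fin 4 → ℝ)} (hA : IsRelOneAnosov ρ ξ ξs)
    {x y : M} (hxy : x ≠ y) {v φ : Fin 4 → ℝ} (hv : v ≠ 0) (hφ : φ ≠ 0)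
    (hξ : ξ x = Projectivization.mk ℝ v hv) (hξs : ξs x = Projectivization.mk ℝ φ hφ)
    {g : ℕ → Γ} (hg : ConvLocUnif g x x) :
    ∃ θ : ℕ → ℕ, StrictMono θ ∧ ∃ s : ℝ, s ≠ 0 ∧
      (∀ i j, Tendsto (fun n => (ρ (g (θ n)) : M4) i j / nn (ρ (g (θ n)) : M4)) atTop
        (𝓝 (s * (v i * φ j)))) ∧
      Tendsto (fun n => nn (ρ (g (θ n)) : M4)) atTop atTop := by
  obtain ⟨η, hη0, hη⟩ : ∃ (η : Fin 4 → ℝ) (h : η ≠ 0), ξs y = Projectivization.mk ℝ η h :=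
    ⟨(ξs y).rep, (ξs y).rep_nonzero, (Projectivization.mk_rep _).symm⟩
  have hdet : ∀ n, (ρ (g n) : M4).det = 1 := fun n => (ρ (g n)).2
  refine limit_rank_one (fun n => (ρ (g n) : M4)) hdet v φ η hv hφ hη0
    (hA.transverse x y hxy v η hv hη0 hξ hη) ?_ ?_
  · intro u hu hφu
    rw [← hξ]
    exact hA.dynamics g x x (fun z hz => hg.pt hz) (fun z hz => hg.inv.pt hz) φ hφ hξs u
      (fun n => mulVec_ne (hdet n) hu) hφu
  · have h1 := (hA.continuous_snd.tendsto x).comp (hg.inv.pt hxy.symm)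
    rw [hξs] at h1
    refine h1.congr fun n => ?_
    have e : ((ρ (g n)⁻¹)⁻¹ : Matrix.SpecialLinearGroup (Fin 4) ℝ) = ρ (g n) := by
      rw [map_inv, inv_inv]
    have h2 := hA.equivariant_snd (g n)⁻¹ y η hη0
      (by rw [e]; exact vecMul_ne (hdet n) hη0) hη
    rw [Function.comp_apply, h2]
    congr 1
    rw [e]

lemma eig_fst {ρ : Γ →* Matrix.SpecialLinearGroup (Fin 4) ℝ}
    {ξ ξs : M → Projectivization ℝ (Fin 4 → ℝ)} (hA : IsRelOneAnosov ρ ξ ξs)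
    {x : M} {v : Fin 4 → ℝ} (hv : v ≠ 0)
    (hξ : ξ x = Projectivization.mk ℝ v hv) {g : Γ} (hg : g • x = x) :
    ∃ l : ℝ, (ρ g : M4) *ᵥ v = l • v := by
  have h1 := hA.equivariant_fst g x v hv (mulVec_ne (ρ g).2 hv) hξ
  rw [hg, hξ, eq_comm, Projectivization.mk_eq_mk_iff'] at h1
  obtain ⟨l, hl⟩ := h1
  exact ⟨l, hl.symm⟩

lemma eig_snd {ρ : Γ →* Matrix.SpecialLinearGroup (Fin 4) ℝ}
    {ξ ξs : M → Projectivization ℝ (Fin 4 → ℝ)} (hA : IsRelOneAnosov ρ ξ ξs)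
    {x : M} {φ : Fin 4 → ℝ} (hφ : φ ≠ 0)
    (hξs : ξs x = Projectivization.mk ℝ φ hφ) {g : Γ} (hg : g • x = x) :
    ∃ l : ℝ, φ ᵥ* (ρ g : M4) = l • φ := by
  have e : ((ρ g⁻¹)⁻¹ : Matrix.SpecialLinearGroup (Fin 4) ℝ) = ρ g := by
    rw [map_inv, inv_inv]
  have hg' : g⁻¹ • x = x := by rw [inv_smul_eq_iff, hg]
  have h1 := hA.equivariant_snd g⁻¹ x φ hφ (vecMul_ne ((ρ g⁻¹)⁻¹).2 hφ) hξs
  rw [hg', hξs, eq_comm, Projectivization.mk_eq_mk_iff', e] at h1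
  obtain ⟨l, hl⟩ := h1
  exact ⟨l, hl.symm⟩

/-- Eigenvalues on the fixed line blow up if the functional does not vanish on it. -/
lemma eig_blowup {A : ℕ → M4} {v φ : Fin 4 → ℝ} (hv : v ≠ 0) {s : ℝ} (hs : s ≠ 0)
    (hφv : φ ⬝ᵥ v ≠ 0) {l : ℕ → ℝ} (hl : ∀ n, A n *ᵥ v = l n • v)
    (hlim : ∀ i j, Tendsto (fun n => A n i j / nn (A n)) atTop (𝓝 (s * (v i * φ j))))
    (hnn : Tendsto (fun n => nn (A n)) atTop atTop) :
    Tendsto (fun n => |l n|) atTop atTop := by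
  obtain ⟨i, hi⟩ : ∃ i, v i ≠ 0 := Function.ne_iff.1 hv
  have h1 : Tendsto (fun n => ∑ j, A n i j / nn (A n) * v j) atTop
      (𝓝 (∑ j, s * (v i * φ j) * v j)) := tendsto_finsetSum _ fun j _ => (hlim i j).mul_const _
  have e1 : ∀ n, ∑ j, A n i j / nn (A n) * v j = l n * v i / nn (A n) := by
    intro n
    have := congrFun (hl n) i
    simp only [Matrix.mulVec, dotProduct, Pi.smul_apply, smul_eq_mul] at this
    rw [← this, Finset.sum_div]
    exact Finset.sum_congr rfl fun j _ => by ring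
  have e2 : ∑ j, s * (v i * φ j) * v j = s * v i * (φ ⬝ᵥ v) := by
    rw [dotProduct, Finset.mul_sum]
    exact Finset.sum_congr rfl fun j _ => by ring
  rw [e2] at h1
  simp only [e1] at h1
  have h2 : Tendsto (fun n => |l n * v i / nn (A n)| * |v i|⁻¹) atTop
      (𝓝 (|s * v i * (φ ⬝ᵥ v)| * |v i|⁻¹)) := h1.abs.mul_const _
  have h3 := hnn.atTop_mul_pos (by positivity) h2
  refine h3.congr' ?_
  filter_upwards [hnn.eventually_gt_atTop 0] with n hn
  rw [abs_div, abs_mul, abs_of_pos hn]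
  have := abs_ne_zero.2 hi
  field_simp

lemma anosov_isotropic [CompactSpace M] [T2Space M]
    (hperf : ∀ x : M, Filter.NeBot (𝓝[≠] x)) (hconv : IsConvergenceAction Γ M)
    {ρ : Γ →* Matrix.SpecialLinearGroup (Fin 4) ℝ}
    {ξ ξs : M → Projectivization ℝ (Fin 4 → ℝ)} (hA : IsRelOneAnosov ρ ξ ξs)
    {x y : M} (hx : IsBoundedParabolicPoint Γ x) (hxy : x ≠ y)
    {v φ : Fin 4 → ℝ} (hv : v ≠ 0) (hφ : φ ≠ 0)
    (hξ : ξ x = Projectivization.mk ℝ v hv) (hξs : ξs x = Projectivization.mk ℝ φ hφ) :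
    φ ⬝ᵥ v = 0 := by
  by_contra hne
  haveI := hx.1
  let e := Infinite.natEmbedding (MulAction.stabilizer Γ x)
  obtain ⟨α, hα, hc⟩ := parabolic_seq hperf hconv hx (fun n => (e n : Γ)) (fun n => (e n).2)
    (fun a b hab => e.injective (Subtype.ext hab))
  obtain ⟨θ, hθ, s, hs, hlim, hnn⟩ := anosov_limit hA hxy hv hφ hξ hξs hc
  have hc' := (hc.sub hθ.tendsto_atTop).inv
  obtain ⟨θ', hθ', s', hs', hlim', hnn'⟩ := anosov_limit hA hxy hv hφ hξ hξs hc'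
  have hst : ∀ n, ((e (α (θ (θ' n)))) : Γ) • x = x := fun n => (e _).2
  choose l hl using fun n => eig_fst hA hv hξ (hst n)
  choose l' hl' using fun n => eig_fst hA hv hξ
    (g := ((e (α (θ (θ' n)))) : Γ)⁻¹) (by rw [inv_smul_eq_iff, hst n])
  have b1 := eig_blowup hv hs hne hl (fun i j => (hlim i j).comp hθ'.tendsto_atTop)
    (hnn.comp hθ'.tendsto_atTop)
  have b2 := eig_blowup hv hs' hne hl' hlim' hnn'
  have hll : ∀ n, l n * l' n = 1 := by
    intro n
    have h1 : (ρ (e (α (θ (θ' n))) : Γ)⁻¹ : M4) * (ρ (e (α (θ (θ' n))) : Γ) : M4) = 1 := by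
      rw [← Matrix.SpecialLinearGroup.coe_mul, ← map_mul, inv_mul_cancel, map_one,
        Matrix.SpecialLinearGroup.coe_one]
    have h2 := congrArg (fun B : M4 => B *ᵥ v) h1
    simp only [← Matrix.mulVec_mulVec, hl, Matrix.mulVec_smul, hl', Matrix.one_mulVec,
      smul_smul] at h2
    obtain ⟨i, hi⟩ : ∃ i, v i ≠ 0 := Function.ne_iff.1 hv
    have h3 := congrFun h2 i
    simp only [Pi.smul_apply, smul_eq_mul] at h3
    exact mul_right_cancel₀ hi (by rw [h3, one_mul])
  obtain ⟨n, h1, h2⟩ := ((b1.eventually_gt_atTop 1).and (b2.eventually_gt_atTop 1)).exists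
  have h3 : |l n| * |l' n| = 1 := by rw [← abs_mul, hll, abs_one]
  nlinarith

/-- The restriction of the representation to the stabilizer, in matrix form. -/
def stabHom (ρ : Γ →* Matrix.SpecialLinearGroup (Fin 4) ℝ) (x : M) :
    MulAction.stabilizer Γ x →* M4 where
  toFun g := (ρ (g : Γ) : M4)
  map_one' := by simp
  map_mul' g k := by simp

lemma exists_domRep [CompactSpace M] [T2Space M]
    (hperf : ∀ x : M, Filter.NeBot (𝓝[≠] x)) (hconv : IsConvergenceAction Γ M)
    {ρ : Γ →* Matrix.SpecialLinearGroup (Fin 4) ℝ}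
    {ξ ξs : M → Projectivization ℝ (Fin 4 → ℝ)} (hA : IsRelOneAnosov ρ ξ ξs)
    {x : M} (hx : IsBoundedParabolicPoint Γ x) :
    ∃ m : MulAction.stabilizer Γ x →* M4, DomRep m := by
  obtain ⟨y, hy⟩ : ∃ y, x ≠ y := by
    haveI := hperf x
    obtain ⟨y, hy⟩ := (self_mem_nhdsWithin : {x}ᶜ ∈ 𝓝[≠] x) |> Filter.nonempty_of_mem
    exact ⟨y, fun h => hy h.symm⟩
  obtain ⟨v, hv, hξ⟩ : ∃ (η : Fin 4 → ℝ) (h : η ≠ 0), ξ x = Projectivization.mk ℝ η h :=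
    ⟨(ξ x).rep, (ξ x).rep_nonzero, (Projectivization.mk_rep _).symm⟩
  obtain ⟨φ, hφ, hξs⟩ : ∃ (η : Fin 4 → ℝ) (h : η ≠ 0), ξs x = Projectivization.mk ℝ η h :=
    ⟨(ξs x).rep, (ξs x).rep_nonzero, (Projectivization.mk_rep _).symm⟩
  have hiso := anosov_isotropic hperf hconv hA hx hy hv hφ hξ hξs
  obtain ⟨S, S', hSS, a, b, ha, hb, hSa, hSb⟩ := exists_adapted v φ hv hφ hiso
  have hSv : ∀ i, a * (S *ᵥ v) i = (1 : M4) i 0 := by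
    intro i
    rw [← hSS, Matrix.mul_apply, Matrix.mulVec, dotProduct, Finset.mul_sum]
    exact Finset.sum_congr rfl fun k _ => by rw [hSa]; ring
  have hφS : ∀ j, b * (φ ᵥ* S') j = (1 : M4) 3 j := by
    intro j
    rw [← hSS, Matrix.mul_apply, Matrix.vecMul, dotProduct, Finset.mul_sum]
    exact Finset.sum_congr rfl fun k _ => by rw [hSb]; ring
  have hentry : ∀ (B : M4) i j, (S * B * S') i j = ∑ k, ∑ l, S i l * B l k * S' k j := by
    intro B i j
    simp only [Matrix.mul_apply, Finset.sum_mul]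
  refine ⟨conjHom (stabHom ρ x) S S' hSS, ?_, ?_, ?_, ?_⟩
  · intro g i hi
    obtain ⟨l, hl⟩ := eig_fst hA hv hξ (g := (g : Γ)) g.2
    have h1 : (S * (ρ (g : Γ) : M4) * S') i 0 = a * l * (S *ᵥ v) i := by
      have : (S * (ρ (g : Γ) : M4) * S') i 0 = a * (S *ᵥ ((ρ (g : Γ) : M4) *ᵥ v)) i := by
        rw [Matrix.mulVec_mulVec, Matrix.mul_apply, Matrix.mulVec, dotProduct, Finset.mul_sum]
        exact Finset.sum_congr rfl fun k _ => by rw [hSa]; ring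
      rw [this, hl, Matrix.mulVec_smul, Pi.smul_apply, smul_eq_mul]; ring
    show (S * (ρ (g : Γ) : M4) * S') i 0 = 0
    have h2 := hSv i
    rw [Matrix.one_apply_ne hi] at h2
    rw [h1]
    linear_combination l * h2
  · intro g j hj
    obtain ⟨l, hl⟩ := eig_snd hA hφ hξs (g := (g : Γ)) g.2
    have h1 : (S * (ρ (g : Γ) : M4) * S') 3 j = b * l * (φ ᵥ* S') j := by
      have : (S * (ρ (g : Γ) : M4) * S') 3 j = b * ((φ ᵥ* (ρ (g : Γ) : M4)) ᵥ* S') j := by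
        rw [Matrix.vecMul_vecMul, mul_assoc, Matrix.mul_apply, Matrix.vecMul, dotProduct,
          Finset.mul_sum]
        exact Finset.sum_congr rfl fun k _ => by rw [hSb]; ring
      rw [this, hl, Matrix.smul_vecMul, Pi.smul_apply, smul_eq_mul]; ring
    show (S * (ρ (g : Γ) : M4) * S') 3 j = 0
    have h2 := hφS j
    rw [Matrix.one_apply_ne hj.symm] at h2
    rw [h1]
    linear_combination l * h2
  · intro g
    show (S * (ρ (g : Γ) : M4) * S').det = 1
    have := congrArg Matrix.det hSS
    rw [Matrix.det_mul, Matrix.det_one] at this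
    rw [Matrix.det_mul, Matrix.det_mul, (ρ (g : Γ)).2, mul_one, this]
  · refine Dom.of_seq _ fun g hg => ?_
    obtain ⟨α, hα, hc⟩ := parabolic_seq hperf hconv hx (fun n => (g n : Γ)) (fun n => (g n).2)
      (fun p q hpq => hg (Subtype.ext hpq))
    obtain ⟨θ, hθ, s, hs, hlim, hnn⟩ := anosov_limit hA hy hv hφ hξ hξs hc
    refine ⟨fun n => α (θ n), ?_⟩
    have hL : ∀ i j, Tendsto (fun n => (S * (ρ (g (α (θ n)) : Γ) : M4) * S') i j /
        nn (ρ (g (α (θ n)) : Γ) : M4)) atTop (𝓝 (s * ((S *ᵥ v) i * (φ ᵥ* S') j))) := by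
      intro i j
      have h1 : Tendsto (fun n => ∑ k, ∑ l, S i l * ((ρ (g (α (θ n)) : Γ) : M4) l k /
          nn (ρ (g (α (θ n)) : Γ) : M4)) * S' k j) atTop
          (𝓝 (∑ k, ∑ l, S i l * (s * (v l * φ k)) * S' k j)) :=
        tendsto_finsetSum _ fun k _ => tendsto_finsetSum _ fun l _ =>
          ((hlim l k).const_mul _).mul_const _
      have e1 : ∑ k, ∑ l, S i l * (s * (v l * φ k)) * S' k j
          = s * ((S *ᵥ v) i * (φ ᵥ* S') j) := by
        simp only [Matrix.mulVec, Matrix.vecMul, dotProduct]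
        rw [Finset.sum_mul_sum, Finset.mul_sum, Finset.sum_comm]
        refine Finset.sum_congr rfl fun k _ => ?_
        rw [Finset.mul_sum]
        exact Finset.sum_congr rfl fun l _ => by ring
      rw [e1] at h1
      refine h1.congr fun n => ?_
      rw [hentry, Finset.sum_div]
      refine Finset.sum_congr rfl fun k _ => ?_
      rw [Finset.sum_div]
      exact Finset.sum_congr rfl fun l _ => by ring
    have h0 : ∀ i, i ≠ 0 → (S *ᵥ v) i = 0 := fun i hi => by
      have := hSv i
      rw [Matrix.one_apply_ne hi] at this
      exact (mul_eq_zero.1 this).resolve_left ha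
    have h3 : ∀ j, j ≠ 3 → (φ ᵥ* S') j = 0 := fun j hj => by
      have := hφS j
      rw [Matrix.one_apply_ne hj.symm] at this
      exact (mul_eq_zero.1 this).resolve_left hb
    have h00 : (S *ᵥ v) 0 ≠ 0 := fun h => by
      have := hSv 0
      rw [h] at this; simp at this
    have h33 : (φ ᵥ* S') 3 ≠ 0 := fun h => by
      have := hφS 3
      rw [h] at this; simp at this
    refine Dom.of_limit hnn (mul_ne_zero hs (mul_ne_zero h00 h33)) (hL 0 3) ?_
    intro i j hij
    have := hL i j
    have hz : s * ((S *ᵥ v) i * (φ ᵥ* S') j) = 0 := by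
      by_cases hi : i = 0
      · rw [h3 j fun hj => hij ⟨hi, hj⟩]; simp
      · rw [h0 i hi]; simp
    rw [hz] at this
    exact this

end final

/-- **Theorem (peripherals of relatively 1-Anosov subgroups of SL₄(ℝ)).**
If `(Γ, M)` is a boundary pair with `M` connected and not homeomorphic to the circle, and
`ρ : Γ → SL₄(ℝ)` is relatively 1-Anosov, then the stabilizer of every bounded parabolic point
of `M` is virtually `ℤ` or `ℤ × ℤ`. -/
theorem rel_anosov_SL4_peripherals_virtually_abelian
    {Γ M : Type} [Group Γ] [TopologicalSpace M] [MulAction Γ M]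
    (hBP : IsBoundaryPair Γ M)
    (hconn : ConnectedSpace M) (hnotcircle : IsEmpty (M ≃ₜ Circle1))
    (ρ : Γ →* Matrix.SpecialLinearGroup (Fin 4) ℝ)
    (ξ ξs : M → Projectivization ℝ (Fin 4 → ℝ))
    (hAnosov : IsRelOneAnosov ρ ξ ξs) :
    ∀ x : M, IsBoundedParabolicPoint Γ x →
      ∃ H : Subgroup (MulAction.stabilizer Γ x), H.FiniteIndex ∧
        (Nonempty (H ≃* Multiplicative ℤ) ∨ Nonempty (H ≃* Multiplicative (ℤ × ℤ))) := by
  intro x hx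
  haveI := hBP.compact
  haveI := hBP.metrizable
  haveI := hx.1
  haveI : T2Space M := TopologicalSpace.t2Space_of_metrizableSpace
  obtain ⟨m, hm⟩ := exists_domRep hBP.perfect hBP.conv hAnosov hx
  exact hm.VZ
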